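/- Let G ↷ (X, μ) be a pmp action of a countable group, let F be a G-invariant sub-σ-algebra, and let ξ be a collection of Borel subsets of X. If (Σ_n)_{n∈ℕ} is an increasing sequence of G-invariant sub-σ-algebras such that ξ ⊆ ⋁_{n∈ℕ} Σ_n ∨ F modulo μ-null sets, then rh_{G,μ}(ξ | F) ≤ rh_{G,μ}(Σ_1 | F) + ∑_{n≥2} rh_{G,μ}(Σ_n | Σ_{n−1} ∨ F). -/

import Mathlib

open MeasureTheory Set Function
open scoped ENNReal symmDiff

/-- A set in a measurable space is *analytic* if it is the image of a Borel subset of a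
standard Borel space under a Borel (measurable) map. -/
def IsAnalyticS {W : Type*} [MeasurableSpace W] (A : Set W) : Prop :=
  ∃ (Z : Type) (mZ : MeasurableSpace Z), @StandardBorelSpace Z mZ ∧
    ∃ (B : Set Z) (f : Z → W), MeasurableSet[mZ] B ∧ @Measurable Z W mZ _ f ∧ f '' B = A

/-- The smallest `G`-invariant sub-σ-algebra containing the collection `ξ`. -/
def sigmaG (G : Type*) {X : Type*} [Group G] [MulAction G X] (ξ : Set (Set X)) :
    MeasurableSpace X :=
  MeasurableSpace.generateFrom {B | ∃ (g : G), ∃ A ∈ ξ, B = (fun x => g • x) ⁻¹' A}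

/-- The σ-algebra of `G`-invariant measurable sets. -/
def invSigma (G X : Type*) [Group G] [MulAction G X] [MeasurableSpace X] :
    MeasurableSpace X :=
  MeasurableSpace.generateFrom {A | MeasurableSet A ∧ ∀ g : G, (fun x => g • x) ⁻¹' A = A}

/-- Conditional Shannon entropy `H_μ(α | m)` of a countable partition `α` given a
sub-σ-algebra `m`, valued in `[0,∞]`. -/
noncomputable def condEnt {X : Type*} (m : MeasurableSpace X) [mX : MeasurableSpace X]
    (μ : Measure X) {ι : Type*} (α : ι → Set X) : ℝ≥0∞ :=
  ∫⁻ x, ∑' i, ENNReal.ofReal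
    (Real.negMulLog ((μ[(α i).indicator (fun _ => (1 : ℝ)) | m]) x)) ∂μ

/-- Shannon entropy `H_μ(α)` of a countable partition. -/
noncomputable def shEnt {X : Type*} [MeasurableSpace X] (μ : Measure X)
    {ι : Type*} (α : ι → Set X) : ℝ≥0∞ :=
  ∑' i, ENNReal.ofReal (Real.negMulLog (μ (α i)).toReal)

/-- `α` is a countable Borel partition of `X` (indexed by `ℕ`, cells may be empty). -/
def IsPartition {X : Type*} [MeasurableSpace X] (α : ℕ → Set X) : Prop :=
  (∀ i, MeasurableSet (α i)) ∧ Pairwise (Function.onFun Disjoint α) ∧ (⋃ i, α i) = univ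

/-- Every set of `ξ` agrees with an `m`-measurable set modulo `μ`-null sets. -/
def SubsetMod {X : Type*} (m : MeasurableSpace X) [mX : MeasurableSpace X] (μ : Measure X)
    (ξ : Set (Set X)) : Prop :=
  ∀ A ∈ ξ, ∃ B, MeasurableSet[m] B ∧ μ (A ∆ B) = 0

/-- Outer Rokhlin entropy `rh_{G,μ}(ξ | F)`. -/
noncomputable def outerRokhlin (G : Type*) {X : Type*} (ξ : Set (Set X))
    (F : MeasurableSpace X) [Group G] [MulAction G X] [mX : MeasurableSpace X]
    (μ : Measure X) : ℝ≥0∞ :=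
  sInf { h | ∃ α : ℕ → Set X, IsPartition α ∧
      SubsetMod (sigmaG G (Set.range α) ⊔ F ⊔ invSigma G X) μ ξ ∧
      h = condEnt (F ⊔ invSigma G X) μ α }

/-- Rokhlin entropy `rh_G(X, μ | F)`. -/
noncomputable def rokhlin (G : Type*) {X : Type*} (F : MeasurableSpace X) [Group G]
    [MulAction G X] [mX : MeasurableSpace X] (μ : Measure X) : ℝ≥0∞ :=
  outerRokhlin G {A | MeasurableSet A} F μ

/-- Outer Rokhlin entropy `rh_{G,μ}(S | F)` of a sub-σ-algebra `S`. -/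
noncomputable def outerRokhlinAlg (G : Type*) {X : Type*} (S F : MeasurableSpace X) [Group G]
    [MulAction G X] [mX : MeasurableSpace X] (μ : Measure X) : ℝ≥0∞ :=
  outerRokhlin G {A | MeasurableSet[S] A} F μ

/-- The action of `G` on `(X, μ)` is probability-measure-preserving. -/
def IsPmp (G : Type*) {X : Type*} [Group G] [MulAction G X] [MeasurableSpace X]
    (μ : Measure X) : Prop :=
  ∀ g : G, MeasurePreserving (fun x => g • x) μ μ

/-- Aperiodicity: μ-almost-every `G`-orbit is infinite. -/
def Aperiodic (G : Type*) {X : Type*} [Group G] [MulAction G X] [MeasurableSpace X]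
    (μ : Measure X) : Prop :=
  ∀ᵐ x ∂μ, (MulAction.orbit G x).Infinite

/-- Ergodicity of a measure: every invariant Borel set is null or conull. -/
def IsErgodicInv (G : Type*) {X : Type*} [Group G] [MulAction G X] [MeasurableSpace X]
    (ν : Measure X) : Prop :=
  ∀ A : Set X, MeasurableSet A → (∀ g : G, (fun x => g • x) ⁻¹' A = A) → ν A = 0 ∨ ν A = 1

/-- `F` is a `G`-invariant σ-algebra. -/
def InvariantAlg (G : Type*) {X : Type*} (F : MeasurableSpace X) [Group G] [MulAction G X] :
    Prop :=
  ∀ (g : G) (A : Set X), MeasurableSet[F] A → MeasurableSet[F] ((fun x => g • x) ⁻¹' A)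

/-- `F` is countably generated. -/
def CountablyGen {X : Type*} (F : MeasurableSpace X) : Prop :=
  ∃ S : Set (Set X), S.Countable ∧ F = MeasurableSpace.generateFrom S

/-- `π` is an ergodic decomposition map for `μ`. -/
def IsErgDecomp (G : Type*) {X : Type*} [Group G] [MulAction G X] [MeasurableSpace X]
    (μ : Measure X) (π : X → Measure X) : Prop :=
  Measurable π ∧
  (∀ x, IsProbabilityMeasure (π x) ∧ IsPmp G (π x) ∧ IsErgodicInv G (π x)) ∧
  (∀ (g : G) (x : X), π (g • x) = π x) ∧
  (∀ ν : Measure X, IsProbabilityMeasure ν → IsPmp G ν → IsErgodicInv G ν →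
      ν {x | π x = ν} = 1) ∧
  (∀ B : Set X, MeasurableSet B → μ B = ∫⁻ x, π x B ∂μ)

/-!
Let `α n` be an almost optimal partition for `S n` relative to the past, and let `A n` be the join
of that past with the invariant σ-algebra. It suffices to find one labelling `c` with
`H(c | A 0) ≤ ∑ n, (H(α n | A n) + 3 ε n)` from which, together with `A 0`, every `A n` can be
recovered modulo null sets.

On the part of the space where complete sections of arbitrarily small measure exist, every point
sends its label under `α n` to its first translate in a tiny complete section `B n`, and each point
of `B n` records the word it receives, coded by the rank of this word among all words ordered by
their cost `-log` of the conditional probability given `A n`. The logarithm of a rank is at most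
the cost, and by mass transport the total cost is `H(α n | A n)`; the labels off `B n` are `0` and
cost at most `ε n`. Decoding stage `n` only uses `A n`, so the stages are decoded one after the
other. By the Borel–Cantelli lemma almost every point carries finitely many nonzero labels, which
form a single word of finite length.

On the remaining part there is a Borel transversal. A transversal generates, together with the
invariant σ-algebra, every Borel subset of its saturation, so it is enough to name one partial
transversal, meeting each orbit at the first stage `n` at which `α n` is not determined by `A n`.
Before this stage `A n` agrees with `A 0`, and the transversal can be chosen inside a cell of `α n`,
which bounds its entropy by that of `α n`.
-/

/-! ### Code lengths and entropy of probability vectors -/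

section CodeLength

/-- `exp (-l)` for a code length `l ∈ [0, ∞]`, with value `0` at `l = ∞`. -/
noncomputable def ennExpNeg (l : ℝ≥0∞) : ℝ≥0∞ := EReal.exp (-(l : EReal))

/-- The ideal code length `-log q` of an event of probability `q`, with value `∞` at `q = 0`;
it is truncated to `0` for `q > 1`. -/
noncomputable def ennNegLog (q : ℝ≥0∞) : ℝ≥0∞ := (-ENNReal.log q).toENNReal

/-- The function `-q log q` appearing in Shannon entropy. -/
noncomputable def ennNegMulLog (q : ℝ≥0∞) : ℝ≥0∞ := ENNReal.ofReal (Real.negMulLog q.toReal)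

lemma ennExpNeg_add (a b : ℝ≥0∞) : ennExpNeg (a + b) = ennExpNeg a * ennExpNeg b := by
  rw [ennExpNeg, EReal.coe_ennreal_add, EReal.neg_add (by simp) (by simp), sub_eq_add_neg,
    EReal.exp_add, ennExpNeg, ennExpNeg]

lemma ennExpNeg_antitone : Antitone ennExpNeg := fun _ _ hab =>
  EReal.exp_monotone (EReal.neg_le_neg_iff.2 (EReal.coe_ennreal_le_coe_ennreal_iff.2 hab))

lemma ennExpNeg_top : ennExpNeg ⊤ = 0 := by simp [ennExpNeg]

lemma ennExpNeg_ne_zero {l : ℝ≥0∞} (hl : l ≠ ⊤) : ennExpNeg l ≠ 0 := by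
  simpa [ennExpNeg] using hl

lemma ennExpNeg_zero : ennExpNeg 0 = 1 := by simp [ennExpNeg]

lemma ennExpNeg_ofReal {r : ℝ} (hr : 0 ≤ r) :
    ennExpNeg (ENNReal.ofReal r) = ENNReal.ofReal (Real.exp (-r)) := by
  rw [ennExpNeg, EReal.coe_ennreal_ofReal, max_eq_left hr, ← EReal.coe_neg, EReal.exp_coe]

lemma ennExpNeg_sum {ι : Type*} (s : Finset ι) (f : ι → ℝ≥0∞) :
    ennExpNeg (∑ i ∈ s, f i) = ∏ i ∈ s, ennExpNeg (f i) := by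
  classical
  induction s using Finset.induction_on with
  | empty => simp [ennExpNeg_zero]
  | insert a s ha ih => rw [Finset.sum_insert ha, Finset.prod_insert ha, ennExpNeg_add, ih]

lemma ennExpNeg_ennNegLog {q : ℝ≥0∞} (hq : q ≤ 1) : ennExpNeg (ennNegLog q) = q := by
  have hlog : 0 ≤ -ENNReal.log q := EReal.neg_nonneg.2 (ENNReal.log_le_zero_iff.2 hq)
  rw [ennExpNeg, ennNegLog, EReal.coe_toENNReal hlog, neg_neg, ENNReal.exp_log]

lemma ennNegLog_antitone : Antitone ennNegLog := fun _ _ hab =>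
  EReal.toENNReal_le_toENNReal (EReal.neg_le_neg_iff.2 (ENNReal.log_monotone hab))

lemma measurable_ennNegLog : Measurable ennNegLog :=
  measurable_id.ennreal_log.neg.ereal_toENNReal

lemma measurable_ennNegMulLog : Measurable ennNegMulLog :=
  (Real.continuous_negMulLog.measurable.comp ENNReal.measurable_toReal).ennreal_ofReal

lemma mul_ennNegLog {q : ℝ≥0∞} (hq : q ≠ ⊤) : q * ennNegLog q = ennNegMulLog q := by
  rcases eq_or_ne q 0 with rfl | hq0
  · simp [ennNegMulLog]
  rw [ennNegLog, ENNReal.log_pos_real hq0 hq, ← EReal.coe_neg, EReal.toENNReal_of_ne_top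
    (EReal.coe_ne_top _), EReal.toReal_coe, ennNegMulLog, Real.negMulLog, neg_mul_comm,
    ENNReal.ofReal_mul ENNReal.toReal_nonneg, ENNReal.ofReal_toReal hq]

lemma sum_finsupp_prod {ι α R : Type*} [Zero α] [CommSemiring R]
    (s : Finset ι) (t : ι → Finset α) (f : ι → α → R) :
    ∑ w ∈ s.finsupp t, ∏ i ∈ s, f i (w i) = ∏ i ∈ s, ∑ a ∈ t i, f i a := by
  classical
  rw [Finset.prod_sum, Finset.finsupp, Finset.sum_map]
  refine Finset.sum_congr rfl fun p _ => ?_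
  rw [← Finset.prod_attach]
  exact Finset.prod_congr rfl fun i _ => by simp [Finsupp.indicator_of_mem i.2]

lemma tsum_ennExpNeg_tsum_le_one {ι α : Type*} [Zero α] (l : ι → α → ℝ≥0∞)
    (hl : ∀ i, ∑' a, ennExpNeg (l i a) ≤ 1) :
    ∑' w : ι →₀ α, ennExpNeg (∑' i, l i (w i)) ≤ 1 := by
  classical
  rw [ENNReal.tsum_eq_iSup_sum]
  refine iSup_le fun T => ?_
  let s : Finset ι := T.biUnion Finsupp.support
  let t : ι → Finset α := fun i => T.image fun w => w i
  have hT : T ⊆ s.finsupp t := fun w hw => Finset.mem_finsupp_iff.2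
    ⟨Finset.subset_biUnion_of_mem _ hw, fun i _ => Finset.mem_image_of_mem _ hw⟩
  calc ∑ w ∈ T, ennExpNeg (∑' i, l i (w i))
      ≤ ∑ w ∈ T, ∏ i ∈ s, ennExpNeg (l i (w i)) := Finset.sum_le_sum fun w _ => by
        rw [← ennExpNeg_sum]
        exact ennExpNeg_antitone (ENNReal.sum_le_tsum (f := fun i => l i (w i)) s)
    _ ≤ ∑ w ∈ s.finsupp t, ∏ i ∈ s, ennExpNeg (l i (w i)) := Finset.sum_le_sum_of_subset hT
    _ = ∏ i ∈ s, ∑ a ∈ t i, ennExpNeg (l i a) := sum_finsupp_prod s t fun i a => ennExpNeg (l i a)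
    _ ≤ 1 := Finset.prod_le_one (fun _ _ => zero_le) fun i _ => (ENNReal.sum_le_tsum _).trans (hl i)

lemma ennNegMulLog_add_le {p : ℝ≥0∞} (hp : p ≤ 1) (l : ℝ≥0∞) :
    ennNegMulLog p + p ≤ p * l + ennExpNeg l := by
  rcases eq_or_ne p 0 with rfl | hp0
  · simp [ennNegMulLog]
  rcases eq_or_ne l ⊤ with rfl | hl
  · simp [ENNReal.mul_top hp0]
  lift p to NNReal using ne_top_of_le_ne_top ENNReal.one_ne_top hp
  lift l to NNReal using hl
  have hp_pos : 0 < (p : ℝ) := by simpa [pos_iff_ne_zero] using hp0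
  have hp_one : (p : ℝ) ≤ 1 := by simpa using hp
  have hexp : (p : ℝ) * (-l - Real.log p + 1) ≤ Real.exp (-l) :=
    calc (p : ℝ) * (-l - Real.log p + 1) ≤ p * Real.exp (-l - Real.log p) :=
          mul_le_mul_of_nonneg_left (Real.add_one_le_exp _) hp_pos.le
      _ = Real.exp (-l) := by rw [Real.exp_sub, Real.exp_log hp_pos, mul_div_cancel₀ _ hp_pos.ne']
  rw [← ENNReal.ofReal_coe_nnreal (p := l), ennExpNeg_ofReal l.coe_nonneg, ennNegMulLog,
    ENNReal.coe_toReal, ← ENNReal.ofReal_coe_nnreal (p := p),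
    ← ENNReal.ofReal_add (Real.negMulLog_nonneg p.coe_nonneg hp_one) p.coe_nonneg,
    ← ENNReal.ofReal_mul p.coe_nonneg, ← ENNReal.ofReal_add (by positivity) (Real.exp_pos _).le]
  refine ENNReal.ofReal_le_ofReal ?_
  rw [Real.negMulLog]
  linarith

lemma tsum_ennNegMulLog_le_of_code {ι : Type*} {p l : ι → ℝ≥0∞} (hp : ∑' i, p i = 1)
    (hl : ∑' i, ennExpNeg (l i) ≤ 1) : ∑' i, ennNegMulLog (p i) ≤ ∑' i, p i * l i := by
  refine (ENNReal.add_le_add_iff_right ENNReal.one_ne_top).1 ?_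
  calc ∑' i, ennNegMulLog (p i) + 1 = ∑' i, (ennNegMulLog (p i) + p i) := by
        rw [ENNReal.tsum_add, hp]
    _ ≤ ∑' i, (p i * l i + ennExpNeg (l i)) :=
        ENNReal.tsum_le_tsum fun i => ennNegMulLog_add_le (hp ▸ ENNReal.le_tsum i) _
    _ = ∑' i, p i * l i + ∑' i, ennExpNeg (l i) := ENNReal.tsum_add
    _ ≤ ∑' i, p i * l i + 1 := by gcongr

lemma ennNegMulLog_tsum_le {ι : Type*} {f : ι → ℝ≥0∞} (hf : ∑' i, f i ≠ ⊤) :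
    ennNegMulLog (∑' i, f i) ≤ ∑' i, ennNegMulLog (f i) := by
  rw [← mul_ennNegLog hf, ← ENNReal.tsum_mul_right]
  refine ENNReal.tsum_le_tsum fun i => ?_
  rw [← mul_ennNegLog (ENNReal.ne_top_of_tsum_ne_top hf i)]
  gcongr
  exact ennNegLog_antitone (ENNReal.le_tsum i)

lemma ennNegMulLog_add_one_sub {q : ℝ≥0∞} (hq : q ≤ 1) :
    ennNegMulLog q + ennNegMulLog (1 - q) = ENNReal.ofReal (Real.binEntropy q.toReal) := by
  have hq1 : q.toReal ≤ 1 := by simpa using ENNReal.toReal_mono ENNReal.one_ne_top hq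
  have hq0 : 0 ≤ q.toReal := ENNReal.toReal_nonneg
  rw [ennNegMulLog, ennNegMulLog, ENNReal.toReal_sub_of_le hq ENNReal.one_ne_top,
    ENNReal.toReal_one, ← ENNReal.ofReal_add (Real.negMulLog_nonneg hq0 hq1)
      (Real.negMulLog_nonneg (by linarith) (by linarith)),
    Real.binEntropy_eq_negMulLog_add_negMulLog_one_sub]

lemma binEntropy_le_of_le_of_le_one_sub {p q : ℝ} (hp : 0 ≤ p) (hpq : p ≤ q) (hpq' : p ≤ 1 - q) :
    Real.binEntropy p ≤ Real.binEntropy q := by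
  have hmono := Real.binEntropy_strictMonoOn.monotoneOn
  rcases le_total q 2⁻¹ with hq | hq
  · exact hmono ⟨hp, hpq.trans hq⟩ ⟨hp.trans hpq, hq⟩ hpq
  · have hq' : 1 - q ≤ 2⁻¹ := by linarith
    rw [← Real.binEntropy_one_sub q]
    exact hmono ⟨hp, hpq'.trans hq'⟩ ⟨hp.trans hpq', hq'⟩ hpq'

lemma ennNegMulLog_add_one_sub_le_tsum {ι : Type*} {f : ι → ℝ≥0∞} (hf : ∑' i, f i = 1)
    {j : ι} {p : ℝ≥0∞} (hp : p ≤ f j) (hp' : p ≤ 1 - f j) :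
    ennNegMulLog p + ennNegMulLog (1 - p) ≤ ∑' i, ennNegMulLog (f i) := by
  classical
  have hfj : f j ≤ 1 := hf ▸ ENNReal.le_tsum j
  have hrest : ∑' i, (if i = j then 0 else f i) = 1 - f j := by
    rw [← hf, ENNReal.tsum_eq_add_tsum_ite (f := f) j, ENNReal.add_sub_cancel_left
      (ne_top_of_le_ne_top ENNReal.one_ne_top hfj)]
  have hbin : Real.binEntropy p.toReal ≤ Real.binEntropy (f j).toReal := by
    refine binEntropy_le_of_le_of_le_one_sub ENNReal.toReal_nonneg
      (ENNReal.toReal_mono (ne_top_of_le_ne_top ENNReal.one_ne_top hfj) hp) ?_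
    rw [← ENNReal.toReal_one, ← ENNReal.toReal_sub_of_le hfj ENNReal.one_ne_top]
    exact ENNReal.toReal_mono (ENNReal.sub_ne_top ENNReal.one_ne_top) hp'
  calc ennNegMulLog p + ennNegMulLog (1 - p)
      ≤ ennNegMulLog (f j) + ennNegMulLog (1 - f j) := by
        rw [ennNegMulLog_add_one_sub (hp.trans hfj), ennNegMulLog_add_one_sub hfj]
        exact ENNReal.ofReal_le_ofReal hbin
    _ ≤ ennNegMulLog (f j) + ∑' i, ennNegMulLog (if i = j then 0 else f i) := by
        gcongr
        rw [← hrest]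
        exact ennNegMulLog_tsum_le (hrest ▸ ENNReal.sub_ne_top ENNReal.one_ne_top)
    _ = ∑' i, ennNegMulLog (f i) := by
        rw [ENNReal.tsum_eq_add_tsum_ite (f := fun i => ennNegMulLog (f i)) j]
        congr 1
        exact tsum_congr fun i => by split_ifs <;> simp [ennNegMulLog]

/-- A universal code for the natural numbers: the symbol `0` costs an arbitrarily small `ε`, and
`n ≥ 1` costs `(1 + η) log n + b`, which is summable because `∑ n⁻¹⁻ᶯ` is. -/
noncomputable def natCodeLength (ε η b : ℝ) (n : ℕ) : ℝ≥0∞ :=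
  if n = 0 then ENNReal.ofReal ε
  else ENNReal.ofReal b + ENNReal.ofReal (1 + η) * ENNReal.ofReal (Real.log n)

lemma ennExpNeg_natCodeLength_succ (ε : ℝ) {η b : ℝ} (hη : 0 ≤ η) (hb : 0 ≤ b) (n : ℕ) :
    ennExpNeg (natCodeLength ε η b (n + 1)) =
      ENNReal.ofReal (Real.exp (-b) * ((n + 1 : ℕ) : ℝ) ^ (-(1 + η))) := by
  rw [natCodeLength, if_neg n.succ_ne_zero, ← ENNReal.ofReal_mul (by positivity),
    ← ENNReal.ofReal_add hb (by positivity), ennExpNeg_ofReal (by positivity),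
    Real.rpow_def_of_pos (by positivity), ← Real.exp_add]
  congr 2
  ring

lemma exists_tsum_ennExpNeg_natCodeLength_le_one {ε η : ℝ} (hε : 0 < ε) (hη : 0 < η) :
    ∃ b : ℝ, ∑' n, ennExpNeg (natCodeLength ε η b n) ≤ 1 := by
  have hsum : Summable fun n : ℕ => ((n + 1 : ℕ) : ℝ) ^ (-(1 + η)) :=
    (summable_nat_add_iff 1).2 (Real.summable_nat_rpow.2 (by linarith))
  set Z := ∑' n : ℕ, ((n + 1 : ℕ) : ℝ) ^ (-(1 + η))
  have hgap : 0 < 1 - Real.exp (-ε) := sub_pos.2 (Real.exp_lt_one_iff.2 (neg_lt_zero.2 hε))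
  obtain ⟨b, hb0, hb⟩ : ∃ b : ℝ, 0 ≤ b ∧ Real.exp (-b) * Z < 1 - Real.exp (-ε) := by
    have hlim : Filter.Tendsto (fun b : ℝ => Real.exp (-b) * Z) Filter.atTop (nhds 0) := by
      simpa using Real.tendsto_exp_neg_atTop_nhds_zero.mul_const Z
    exact ((Filter.eventually_ge_atTop 0).and (hlim.eventually_lt_const hgap)).exists
  refine ⟨b, ?_⟩
  rw [tsum_eq_zero_add' ENNReal.summable]
  simp only [ennExpNeg_natCodeLength_succ ε hη.le hb0]
  rw [← ENNReal.ofReal_tsum_of_nonneg (fun n => by positivity) (hsum.mul_left _), tsum_mul_left,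
    natCodeLength, if_pos rfl, ennExpNeg_ofReal hε.le,
    ← ENNReal.ofReal_add (Real.exp_pos _).le (by positivity), ← ENNReal.ofReal_one]
  exact ENNReal.ofReal_le_ofReal (by linarith)

end CodeLength

/-! ### Conditional probability and conditional entropy of labellings -/

section ConditionalProbability

variable {X V : Type*} {m m' mX : MeasurableSpace X} {μ : Measure[mX] X} {s t D P : Set X}
  {a : X → V}

/-- The sets agreeing with an `m`-measurable set modulo `μ`-null sets. -/
abbrev aeCompletion {X : Type*} {mX : MeasurableSpace X} (m : MeasurableSpace X)
    (μ : Measure[mX] X) : MeasurableSpace X :=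
  eventuallyMeasurableSpace m (ae μ)

lemma measurable_tsum_apply [Countable V] {f : V → X → ℝ≥0∞} (hf : ∀ v, Measurable[m] (f v)) :
    Measurable[m] fun x => ∑' v, f v x :=
  @Measurable.tsum X _ V m _ _ _ _ _ _ _ _ _ _ _ _ hf

lemma le_aeCompletion (m : MeasurableSpace X) (μ : Measure[mX] X) : m ≤ aeCompletion m μ :=
  le_eventuallyMeasurableSpace

lemma aeCompletion_le_of_le (h : m ≤ aeCompletion m' μ) : aeCompletion m μ ≤ aeCompletion m' μ := by
  rintro s ⟨t, ht, hst⟩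
  obtain ⟨u, hu, htu⟩ := h t ht
  exact ⟨u, hu, hst.trans htu⟩

lemma aeCompletion_mono (h : m ≤ m') : aeCompletion m μ ≤ aeCompletion m' μ :=
  aeCompletion_le_of_le (h.trans (le_aeCompletion m' μ))

/-- The conditional probability `μ(s | m)`, as a function with values in `[0, ∞]`. -/
noncomputable def condProb {X : Type*} {mX : MeasurableSpace X} (m : MeasurableSpace X)
    (μ : Measure[mX] X) (s : Set X) : X → ℝ≥0∞ :=
  condLExp m μ (s.indicator 1)

lemma measurable_condProb (m : MeasurableSpace X) (μ : Measure[mX] X) (s : Set X) :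
    Measurable[m] (condProb m μ s) :=
  measurable_condLExp _ _ _

/-- The integrand of the conditional Shannon entropy `H_μ(a | m)` of a labelling `a`: at `x`, the
entropy of the conditional distribution of `a` given `m`. -/
noncomputable def condEntFn {X V : Type*} {mX : MeasurableSpace X} (m : MeasurableSpace X)
    (μ : Measure[mX] X) (a : X → V) (x : X) : ℝ≥0∞ :=
  ∑' v, ennNegMulLog (condProb m μ (a ⁻¹' {v}) x)

/-- The conditional information function of a labelling `a` given `m`: the ideal code length at
`x` of the label `a x`. -/
noncomputable def condInfo {X V : Type*} {mX : MeasurableSpace X} (m : MeasurableSpace X)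
    (μ : Measure[mX] X) (a : X → V) (x : X) : ℝ≥0∞ :=
  ennNegLog (condProb m μ (a ⁻¹' {a x}) x)

lemma condEntFn_comp_equiv {W : Type*} (e : V ≃ W) (a : X → V) :
    condEntFn m μ (e ∘ a) = condEntFn m μ a := by
  ext x
  rw [condEntFn, condEntFn, ← e.tsum_eq]
  simp only [preimage_comp, ← e.image_symm_eq_preimage, image_singleton, e.symm_apply_apply]

lemma measurable_condEntFn [Countable V] (m : MeasurableSpace X) (μ : Measure[mX] X) (a : X → V) :
    Measurable[m] (condEntFn m μ a) :=
  measurable_tsum_apply fun v =>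
    measurable_ennNegMulLog.comp (measurable_condProb m μ (a ⁻¹' {v}))

section Fibers

variable [Countable V] [MeasurableSpace V] [MeasurableSingletonClass V]

lemma measurable_condInfo (hm : m ≤ mX) (ha : Measurable[mX] a) :
    Measurable[mX] (condInfo m μ a) := by
  have huncurry : Measurable fun p : V × X => ennNegLog (condProb m μ (a ⁻¹' {p.1}) p.2) :=
    measurable_from_prod_countable_right fun v =>
      measurable_ennNegLog.comp ((measurable_condProb m μ (a ⁻¹' {v})).mono hm le_rfl)
  exact huncurry.comp (ha.prodMk measurable_id)

lemma lintegral_eq_tsum_setLIntegral_fiber (ha : Measurable[mX] a) (f : X → ℝ≥0∞) :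
    ∫⁻ x, f x ∂μ = ∑' v, ∫⁻ x in a ⁻¹' {v}, f x ∂μ := by
  rw [← lintegral_iUnion (fun v => ha (measurableSet_singleton v))
    (pairwise_disjoint_fiber a), ← preimage_iUnion, iUnion_of_singleton, preimage_univ,
    Measure.restrict_univ]

end Fibers

variable [IsFiniteMeasure μ]

lemma setLIntegral_condProb (hm : m ≤ mX) (hs : MeasurableSet[mX] s) (hD : MeasurableSet[m] D) :
    ∫⁻ x in D, condProb m μ s x ∂μ = μ (s ∩ D) := by
  rw [condProb, setLIntegral_condLExp hm _ _ hD, lintegral_indicator_one hs,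
    Measure.restrict_apply hs]

lemma ae_eq_condProb (hm : m ≤ mX) (hs : MeasurableSet[mX] s) {f : X → ℝ≥0∞}
    (hf : Measurable[m] f) (h : ∀ D, MeasurableSet[m] D → ∫⁻ x in D, f x ∂μ = μ (s ∩ D)) :
    f =ᵐ[μ] condProb m μ s :=
  ae_eq_condLExp hm _ _ hf fun D hD => by
    rw [h D hD, ← setLIntegral_condProb hm hs hD, condProb, setLIntegral_condLExp hm _ _ hD]

lemma condProb_le_one (hm : m ≤ mX) (s : Set X) : ∀ᵐ x ∂μ, condProb m μ s x ≤ 1 := by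
  have hmono := condLExp_mono (P := μ) (mΩ := m) (X := s.indicator 1) (Y := 1)
    (Filter.Eventually.of_forall (indicator_le_self s 1))
  rwa [condLExp_one hm] at hmono

lemma lintegral_condProb_mul (hm : m ≤ mX) (hs : MeasurableSet[mX] s) {u : X → ℝ≥0∞}
    (hu : Measurable[m] u) : ∫⁻ x, condProb m μ s x * u x ∂μ = ∫⁻ x in s, u x ∂μ := by
  have htrim : (μ.withDensity (condProb m μ s)).trim hm = (μ.restrict s).trim hm := by
    refine @Measure.ext _ m _ _ fun D hD => ?_
    rw [trim_measurableSet_eq hm hD, trim_measurableSet_eq hm hD, withDensity_apply _ (hm _ hD),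
      setLIntegral_condProb hm hs hD, Measure.restrict_apply (hm _ hD), inter_comm]
  calc ∫⁻ x, condProb m μ s x * u x ∂μ = ∫⁻ x, u x ∂μ.withDensity (condProb m μ s) :=
        (lintegral_withDensity_eq_lintegral_mul μ ((measurable_condProb m μ s).mono hm le_rfl)
          (hu.mono hm le_rfl)).symm
    _ = ∫⁻ x in s, u x ∂μ := by rw [← lintegral_trim hm hu, htrim, lintegral_trim hm hu]

lemma condProb_inter (hm : m ≤ mX) (hs : MeasurableSet[mX] s) (hD : MeasurableSet[m] D) :
    condProb m μ (s ∩ D) =ᵐ[μ] D.indicator (condProb m μ s) := by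
  refine (ae_eq_condProb hm (hs.inter (hm _ hD)) ((measurable_condProb m μ s).indicator hD)
    fun E hE => ?_).symm
  rw [setLIntegral_indicator (hm _ hD), setLIntegral_condProb hm hs (hD.inter hE), inter_assoc]

lemma condProb_congr_on (hm : m ≤ mX) (hs : MeasurableSet[mX] s) (ht : MeasurableSet[mX] t)
    (hD : MeasurableSet[m] D) (hst : s ∩ D = t ∩ D) :
    ∀ᵐ x ∂μ, x ∈ D → condProb m μ s x = condProb m μ t x := by
  filter_upwards [condProb_inter (μ := μ) hm hs hD, condProb_inter (μ := μ) hm ht hD]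
    with x hxs hxt hx
  rwa [hst, hxt, indicator_of_mem hx, indicator_of_mem hx, eq_comm] at hxs

lemma condProb_eq_of_le_aeCompletion_restrict (hmm' : m' ≤ m) (hm : m ≤ mX)
    (hs : MeasurableSet[mX] s) (hP : MeasurableSet[m'] P)
    (h : m ≤ aeCompletion m' (μ.restrict P)) :
    ∀ᵐ x ∂μ, x ∈ P → condProb m μ s x = condProb m' μ s x := by
  have hPX : MeasurableSet[mX] P := hm _ (hmm' _ hP)
  have hind : P.indicator (condProb m' μ s) =ᵐ[μ] condProb m μ (s ∩ P) := by
    refine ae_eq_condProb hm (hs.inter hPX)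
      (((measurable_condProb m' μ s).mono hmm' le_rfl).indicator (hmm' _ hP)) fun D hD => ?_
    obtain ⟨D', hD', hDD'⟩ := h D hD
    have hmeas : μ (s ∩ (P ∩ D')) = μ (s ∩ (P ∩ D)) := by
      have hcongr := measure_congr (hDD'.symm.inter (ae_eq_refl s))
      rwa [Measure.restrict_apply₀' hPX.nullMeasurableSet,
        Measure.restrict_apply₀' hPX.nullMeasurableSet, inter_comm D', inter_comm D,
        inter_assoc, inter_assoc, inter_comm D', inter_comm D] at hcongr
    rw [setLIntegral_indicator hPX, inter_comm, ← Measure.restrict_restrict (hm _ hD),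
      setLIntegral_congr hDD', Measure.restrict_restrict ((hmm'.trans hm) _ hD'), inter_comm,
      setLIntegral_condProb (hmm'.trans hm) hs (hP.inter hD'), hmeas, inter_assoc]
  filter_upwards [hind, condProb_inter (μ := μ) hm hs (hmm' _ hP)] with x hx hx' hxP
  rwa [indicator_of_mem hxP, hx', indicator_of_mem hxP, eq_comm] at hx

lemma ae_mem_iff_condProb_eq_one (hm : m ≤ mX) (hs : MeasurableSet[mX] s) :
    ∀ᵐ x ∂μ, condProb m μ s x = 0 ∨ condProb m μ s x = 1 → (x ∈ s ↔ condProb m μ s x = 1) := by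
  have hlevel (c : ℝ≥0∞) :
      μ (s ∩ {x | condProb m μ s x = c}) = c * μ {x | condProb m μ s x = c} := by
    have hc : MeasurableSet[m] {x | condProb m μ s x = c} :=
      measurable_condProb m μ s (measurableSet_singleton c)
    rw [← setLIntegral_condProb hm hs hc, setLIntegral_congr_fun (hm _ hc) fun x hx => hx,
      setLIntegral_const]
  have hone : μ ({x | condProb m μ s x = 1} \ s) = 0 := by
    have hsplit := measure_inter_add_sdiff (μ := μ) {x | condProb m μ s x = 1} hs
    rw [inter_comm, hlevel, one_mul] at hsplit
    exact (ENNReal.add_right_inj (measure_ne_top μ _)).1 (hsplit.trans (add_zero _).symm)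
  have hzero : μ (s ∩ {x | condProb m μ s x = 0}) = 0 := by rw [hlevel, zero_mul]
  filter_upwards [measure_eq_zero_iff_ae_notMem.1 hzero, measure_eq_zero_iff_ae_notMem.1 hone]
    with x hx0 hx1 h
  refine ⟨fun hxs => h.resolve_left fun hx => hx0 ⟨hxs, hx⟩, fun hx => ?_⟩
  by_contra hxs
  exact hx1 ⟨hx, hxs⟩

lemma condProb_eq_zero_of_measure_inter_eq_zero (hm : m ≤ mX) (hs : MeasurableSet[mX] s)
    (hD : MeasurableSet[m] D) (h : μ (s ∩ D) = 0) : ∀ᵐ x ∂μ, x ∈ D → condProb m μ s x = 0 := by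
  rw [← setLIntegral_condProb hm hs hD] at h
  exact (setLIntegral_eq_zero_iff (hm _ hD) ((measurable_condProb m μ s).mono hm le_rfl)).1 h

lemma condProb_add_condProb_compl (hm : m ≤ mX) (hs : MeasurableSet[mX] s) :
    ∀ᵐ x ∂μ, condProb m μ s x + condProb m μ sᶜ x = 1 := by
  have hadd := condLExp_add_left (P := μ) (mΩ := m) (sᶜ.indicator 1)
    (X := s.indicator (1 : X → ℝ≥0∞)) (measurable_one.indicator hs).aemeasurable
  rw [indicator_self_add_compl, condLExp_one hm] at hadd
  filter_upwards [hadd] with x hx using hx.symm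

lemma setLIntegral_ennNegLog_condProb (hm : m ≤ mX) (hs : MeasurableSet[mX] s)
    (hD : MeasurableSet[m] D) :
    ∫⁻ x in s, ennNegLog (condProb m μ s x) ∂μ.restrict D =
      ∫⁻ x in D, ennNegMulLog (condProb m μ s x) ∂μ := by
  have hinfo : Measurable[m] fun x => ennNegLog (condProb m μ s x) :=
    measurable_ennNegLog.comp (measurable_condProb m μ s)
  rw [Measure.restrict_restrict hs, inter_comm, ← setLIntegral_indicator (hm _ hD),
    ← lintegral_condProb_mul hm hs (hinfo.indicator hD), ← lintegral_indicator (hm _ hD)]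
  refine lintegral_congr_ae ?_
  filter_upwards [condProb_le_one (μ := μ) hm s] with x hx
  by_cases hxD : x ∈ D
  · simp only [indicator_of_mem hxD, mul_ennNegLog (ne_top_of_le_ne_top ENNReal.one_ne_top hx)]
  · simp only [indicator_of_notMem hxD, mul_zero]

variable [Countable V] [MeasurableSpace V] [MeasurableSingletonClass V]

lemma condEnt_preimage_singleton (ha : Measurable[mX] a) :
    condEnt m μ (fun v => a ⁻¹' {v}) = ∫⁻ x, condEntFn m μ a x ∂μ := by
  refine lintegral_congr_ae ?_
  have hcell (v : V) : (fun x => (condProb m μ (a ⁻¹' {v}) x).toReal) =ᵐ[μ]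
      μ[(a ⁻¹' {v}).indicator (fun _ => (1 : ℝ)) | m] := by
    have hmeas : MeasurableSet[mX] (a ⁻¹' {v}) := ha (measurableSet_singleton v)
    convert! toReal_condLExp m (measurable_one.indicator hmeas).aemeasurable ?_ using 2
    · ext x
      by_cases hx : x ∈ a ⁻¹' {v} <;> simp [hx]
    · rw [lintegral_indicator_one hmeas]
      exact measure_ne_top _ _
  filter_upwards [ae_all_iff.2 hcell] with x hx
  simp only [condEntFn, ennNegMulLog, hx]

lemma tsum_condProb_preimage_singleton (hm : m ≤ mX) (ha : Measurable[mX] a) :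
    ∀ᵐ x ∂μ, ∑' v, condProb m μ (a ⁻¹' {v}) x = 1 := by
  have hcell (v : V) : MeasurableSet[mX] (a ⁻¹' {v}) := ha (measurableSet_singleton v)
  have huniv : condProb m μ univ = 1 := by rw [condProb, indicator_univ, condLExp_one hm]
  have htsum := ae_eq_condProb (μ := μ) hm .univ (f := fun x => ∑' v, condProb m μ (a ⁻¹' {v}) x)
    (measurable_tsum_apply fun v => measurable_condProb m μ _) fun D hD => by
      rw [lintegral_tsum fun v => ((measurable_condProb m μ _).mono hm le_rfl).aemeasurable,
        univ_inter, ← setLIntegral_one, lintegral_eq_tsum_setLIntegral_fiber ha]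
      refine tsum_congr fun v => ?_
      rw [setLIntegral_condProb hm (hcell v) hD, setLIntegral_one, Measure.restrict_apply (hcell v)]
  rwa [huniv] at htsum

lemma setLIntegral_condInfo (hm : m ≤ mX) (ha : Measurable[mX] a) (hD : MeasurableSet[m] D) :
    ∫⁻ x in D, condInfo m μ a x ∂μ = ∫⁻ x in D, condEntFn m μ a x ∂μ := by
  have hcell (v : V) : MeasurableSet[mX] (a ⁻¹' {v}) := ha (measurableSet_singleton v)
  have hmeas (v : V) : Measurable[mX] fun x => ennNegMulLog (condProb m μ (a ⁻¹' {v}) x) :=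
    measurable_ennNegMulLog.comp ((measurable_condProb m μ (a ⁻¹' {v})).mono hm le_rfl)
  simp only [condEntFn]
  rw [lintegral_eq_tsum_setLIntegral_fiber ha, lintegral_tsum fun v => (hmeas v).aemeasurable]
  refine tsum_congr fun v => ?_
  rw [← setLIntegral_ennNegLog_condProb hm (hcell v) hD]
  refine setLIntegral_congr_fun (hcell v) fun x hx => ?_
  rw [condInfo, show a x = v from hx]

lemma setLIntegral_condEntFn_le_of_code (hm : m ≤ mX) (ha : Measurable[mX] a)
    (hD : MeasurableSet[m] D) {l : V → ℝ≥0∞} (hl : ∑' v, ennExpNeg (l v) ≤ 1) :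
    ∫⁻ x in D, condEntFn m μ a x ∂μ ≤ ∫⁻ x in D, l (a x) ∂μ := by
  have hcell (v : V) : MeasurableSet[mX] (a ⁻¹' {v}) := ha (measurableSet_singleton v)
  calc ∫⁻ x in D, condEntFn m μ a x ∂μ
      ≤ ∫⁻ x in D, ∑' v, condProb m μ (a ⁻¹' {v}) x * l v ∂μ := by
        refine lintegral_mono_ae (ae_restrict_of_ae ?_)
        filter_upwards [tsum_condProb_preimage_singleton (μ := μ) hm ha] with x hx
          using tsum_ennNegMulLog_le_of_code hx hl
    _ = ∑' v, μ (a ⁻¹' {v} ∩ D) * l v := by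
        rw [lintegral_tsum fun v =>
          (((measurable_condProb m μ _).mono hm le_rfl).mul_const _).aemeasurable]
        refine tsum_congr fun v => ?_
        rw [lintegral_mul_const _ ((measurable_condProb m μ _).mono hm le_rfl),
          setLIntegral_condProb hm (hcell v) hD]
    _ = ∫⁻ x in D, l (a x) ∂μ := by
        rw [lintegral_eq_tsum_setLIntegral_fiber ha]
        refine tsum_congr fun v => ?_
        rw [setLIntegral_congr_fun (hcell v) (g := fun _ => l v) fun x hx => by
          rw [show a x = v from hx], setLIntegral_const, Measure.restrict_apply (hcell v), mul_comm]

end ConditionalProbability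
/-! ### Saturations, transversals and complete sections of a group action -/

section Action

variable {G X : Type*} [Group G] [MulAction G X] {N T Y : Set X}

/-- The smallest `G`-invariant set containing `N`. -/
def saturation (G : Type*) {X : Type*} [Group G] [MulAction G X] (N : Set X) : Set X :=
  ⋃ g : G, (fun x => g • x) ⁻¹' N

lemma preimage_smul_saturation (N : Set X) (g : G) :
    (fun x => g • x) ⁻¹' saturation G N = saturation G N := by
  simp only [saturation, preimage_iUnion, preimage_preimage, smul_smul]
  exact (Equiv.mulRight g).surjective.iUnion_comp fun h : G => (fun x => h • x) ⁻¹' N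

lemma smul_mem_saturation_iff (g : G) {x : X} : g • x ∈ saturation G N ↔ x ∈ saturation G N :=
  Set.ext_iff.1 (preimage_smul_saturation N g) x

lemma subset_saturation (N : Set X) : N ⊆ saturation G N := fun x hx =>
  mem_iUnion.2 ⟨1, by simpa using hx⟩

lemma saturation_iUnion {ι : Type*} (N : ι → Set X) :
    saturation G (⋃ i, N i) = ⋃ i, saturation G (N i) := by
  simp only [saturation, preimage_iUnion]
  exact iUnion_comm _

lemma saturation_inter {P : Set X} (hP : ∀ g : G, (fun x => g • x) ⁻¹' P = P) (N : Set X) :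
    saturation G (N ∩ P) = saturation G N ∩ P := by
  simp only [saturation, preimage_inter, hP, iUnion_inter]

/-- A set meeting every orbit in at most one point. -/
def IsPartialTransversal (G : Type*) {X : Type*} [Group G] [MulAction G X] (Y : Set X) : Prop :=
  ∀ x ∈ Y, ∀ g : G, g • x ∈ Y → g • x = x

/-- The set of points whose first visit to `T`, along the enumeration `g` of the group, happens at
time `i`. -/
def firstHit (g : ℕ → G) (T : Set X) (i : ℕ) : Set X :=
  disjointed (fun i => (fun x => g i • x) ⁻¹' T) i

lemma smul_mem_of_mem_firstHit {g : ℕ → G} {i : ℕ} {x : X} (hx : x ∈ firstHit g T i) :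
    g i • x ∈ T :=
  disjointed_subset (fun i => (fun x => g i • x) ⁻¹' T) i hx

lemma mem_of_inv_smul_mem_firstHit {g : ℕ → G} {i : ℕ} {x : X}
    (hx : (g i)⁻¹ • x ∈ firstHit g T i) : x ∈ T := by
  simpa using smul_mem_of_mem_firstHit hx

lemma pairwise_disjoint_firstHit (g : ℕ → G) (T : Set X) :
    Pairwise (Disjoint on firstHit g T) :=
  disjoint_disjointed _

lemma iUnion_firstHit {g : ℕ → G} (hg : Surjective g) (T : Set X) :
    ⋃ i, firstHit g T i = saturation G T := by
  simp only [firstHit, iUnion_disjointed]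
  exact hg.iUnion_comp fun h : G => (fun x => h • x) ⁻¹' T

lemma eq_and_smul_eq_of_mem_firstHit (hY : IsPartialTransversal G Y) {g : ℕ → G} {i k : ℕ} {x : X}
    {h : G} (hi : (g i)⁻¹ • x ∈ Y ∩ firstHit g T i) (hk : (g k)⁻¹ • h • x ∈ Y ∩ firstHit g T k) :
    i = k ∧ h • x = x := by
  have hsame : (g k)⁻¹ • h • x = (g i)⁻¹ • x := by
    simpa [mul_smul] using hY _ hi.1 ((g k)⁻¹ * h * g i) (by simpa [mul_smul] using hk.1)
  obtain rfl : i = k := (pairwise_disjoint_firstHit g T).eq <|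
    Set.not_disjoint_iff.2 ⟨_, hi.2, hsame ▸ hk.2⟩
  exact ⟨rfl, smul_left_cancel _ hsame⟩

section SigmaAlgebra

variable {m m' : MeasurableSpace X}

lemma InvariantAlg.measurable_smul (hm : InvariantAlg G m) (g : G) :
    Measurable[m, m] fun x : X => g • x :=
  fun A hA => hm g A hA

lemma InvariantAlg.generateFrom {C : Set (Set X)}
    (h : ∀ (g : G), ∀ A ∈ C,
      MeasurableSet[MeasurableSpace.generateFrom C] ((fun x => g • x) ⁻¹' A)) :
    InvariantAlg G (MeasurableSpace.generateFrom C) := fun g =>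
  MeasurableSpace.generateFrom_le (m := (MeasurableSpace.generateFrom C).map fun x => g • x) (h g)

lemma InvariantAlg.sup (hm : InvariantAlg G m) (hm' : InvariantAlg G m') :
    InvariantAlg G (m ⊔ m') := fun g =>
  sup_le (c := (m ⊔ m').map fun x => g • x) (fun A hA => le_sup_left (a := m) _ (hm g A hA))
    fun A hA => le_sup_right (b := m') _ (hm' g A hA)

lemma sigmaG_le (hm : InvariantAlg G m) {ξ : Set (Set X)} (h : ∀ A ∈ ξ, MeasurableSet[m] A) :
    sigmaG G ξ ≤ m := by
  refine MeasurableSpace.generateFrom_le ?_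
  rintro _ ⟨g, A, hA, rfl⟩
  exact hm g A (h A hA)

lemma measurableSet_sigmaG_of_mem {ξ : Set (Set X)} {A : Set X} (hA : A ∈ ξ) :
    MeasurableSet[sigmaG G ξ] A :=
  MeasurableSpace.measurableSet_generateFrom ⟨1, A, hA, by simp⟩

lemma invariantAlg_sigmaG (ξ : Set (Set X)) : InvariantAlg G (sigmaG G ξ) := by
  refine InvariantAlg.generateFrom ?_
  rintro g _ ⟨h, A, hA, rfl⟩
  exact MeasurableSpace.measurableSet_generateFrom
    ⟨h * g, A, hA, by simp [preimage_preimage, mul_smul]⟩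

lemma InvariantAlg.measurableSet_firstHit (hm : InvariantAlg G m) (g : ℕ → G)
    (hT : MeasurableSet[m] T) (i : ℕ) : MeasurableSet[m] (firstHit g T i) :=
  MeasurableSet.disjointed (fun k => hm (g k) T hT) i

lemma InvariantAlg.measurableSet_saturation [Countable G] (hm : InvariantAlg G m)
    (hN : MeasurableSet[m] N) : MeasurableSet[m] (saturation G N) :=
  MeasurableSet.iUnion fun g => hm g N hN

lemma invSigma_le [MeasurableSpace X] : invSigma G X ≤ ‹MeasurableSpace X› :=
  MeasurableSpace.generateFrom_le fun _ hA => hA.1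

lemma measurableSet_invSigma [MeasurableSpace X] {A : Set X} (hA : MeasurableSet A)
    (h : ∀ g : G, (fun x => g • x) ⁻¹' A = A) : MeasurableSet[invSigma G X] A :=
  MeasurableSpace.measurableSet_generateFrom ⟨hA, h⟩

lemma invariantAlg_invSigma [MeasurableSpace X] : InvariantAlg G (invSigma G X) := by
  refine InvariantAlg.generateFrom ?_
  rintro g A ⟨hA, hA'⟩
  rw [hA' g]
  exact measurableSet_invSigma hA hA'

lemma InvariantAlg.measurableSet_saturation_invSigma [mX : MeasurableSpace X] [Countable G]
    (hX : InvariantAlg G mX) (hN : MeasurableSet N) :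
    MeasurableSet[invSigma G X] (saturation G N) :=
  measurableSet_invSigma (hX.measurableSet_saturation hN) (preimage_smul_saturation N)

/-- Each point of `Y` is moved to its first translate in `N`. -/
lemma InvariantAlg.exists_isPartialTransversal_subset [Countable G] (hm : InvariantAlg G m)
    (hYm : MeasurableSet[m] Y) (hY : IsPartialTransversal G Y) (hN : MeasurableSet[m] N) :
    ∃ Z, MeasurableSet[m] Z ∧ Z ⊆ N ∧ IsPartialTransversal G Z ∧
      saturation G Z = saturation G N ∩ saturation G Y := by
  obtain ⟨g, hg⟩ := exists_surjective_nat G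
  refine ⟨⋃ i, (fun x => (g i)⁻¹ • x) ⁻¹' (Y ∩ firstHit g N i),
    MeasurableSet.iUnion fun i => hm _ _ (hYm.inter (hm.measurableSet_firstHit g hN i)),
    iUnion_subset fun i x hx => mem_of_inv_smul_mem_firstHit hx.2, fun x hx h hhx => ?_, ?_⟩
  · obtain ⟨i, hi⟩ := mem_iUnion.1 hx
    obtain ⟨k, hk⟩ := mem_iUnion.1 hhx
    exact (eq_and_smul_eq_of_mem_firstHit hY hi hk).2
  · refine Subset.antisymm (iUnion_subset fun h x hx => ?_) ?_
    · obtain ⟨i, hi⟩ := mem_iUnion.1 hx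
      exact ⟨mem_iUnion.2 ⟨h, mem_of_inv_smul_mem_firstHit (x := h • x) hi.2⟩,
        mem_iUnion.2 ⟨(g i)⁻¹ * h, by simpa [mul_smul] using hi.1⟩⟩
    · rintro x ⟨hxN, hxY⟩
      obtain ⟨h, hh⟩ := mem_iUnion.1 hxY
      rw [← smul_mem_saturation_iff h, ← iUnion_firstHit hg] at hxN
      obtain ⟨i, hi⟩ := mem_iUnion.1 hxN
      refine mem_iUnion.2 ⟨g i * h, mem_iUnion.2 ⟨i, ?_⟩⟩
      simpa [mul_smul] using And.intro hh hi

end SigmaAlgebra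

section MassTransport

variable {m mX : MeasurableSpace X} {μ : Measure[mX] X}

lemma IsPmp.invariantAlg (hpmp : IsPmp G μ) : InvariantAlg G mX := fun g _ hA =>
  (hpmp g).measurable hA

lemma IsPmp.invariantAlg_aeCompletion (hpmp : IsPmp G μ) (hm : InvariantAlg G m) :
    InvariantAlg G (aeCompletion m μ) := by
  rintro g A ⟨t, ht, hAt⟩
  exact ⟨_, hm g t ht, (hpmp g).quasiMeasurePreserving.preimage_ae_eq hAt⟩

/-- Mass transport: every point sends its mass `u` to its first translate in `T`. -/
lemma IsPmp.lintegral_tsum_firstHit (hpmp : IsPmp G μ) {g : ℕ → G} (hg : Surjective g)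
    (hT : MeasurableSet[mX] T) {u : X → ℝ≥0∞} (hu : Measurable[mX] u) :
    ∫⁻ x, ∑' i, (firstHit g T i).indicator u ((g i)⁻¹ • x) ∂μ =
      ∫⁻ x in saturation G T, u x ∂μ := by
  have hhit := hpmp.invariantAlg.measurableSet_firstHit g hT
  have hind (i : ℕ) : Measurable[mX] ((firstHit g T i).indicator u) := hu.indicator (hhit i)
  rw [lintegral_tsum (f := fun i x => (firstHit g T i).indicator u ((g i)⁻¹ • x))
    fun i => ((hind i).comp (hpmp (g i)⁻¹).measurable).aemeasurable,
    ← iUnion_firstHit hg, lintegral_iUnion hhit (pairwise_disjoint_firstHit g T)]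
  refine tsum_congr fun i => ?_
  rw [(hpmp (g i)⁻¹).lintegral_comp (hind i), lintegral_indicator (hhit i)]

lemma IsPmp.measure_inter_saturation_le [Countable G] (hpmp : IsPmp G μ)
    (hYm : MeasurableSet[mX] Y) (hY : IsPartialTransversal G Y) (hT : MeasurableSet[mX] T) :
    μ (Y ∩ saturation G T) ≤ μ T := by
  obtain ⟨g, hg⟩ := exists_surjective_nat G
  rw [← lintegral_indicator_one hT, ← Measure.restrict_apply hYm, ← lintegral_indicator_one hYm,
    ← hpmp.lintegral_tsum_firstHit hg hT (measurable_one.indicator hYm)]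
  refine lintegral_mono fun x => ?_
  have hzero {i : ℕ} (hi : (g i)⁻¹ • x ∉ Y ∩ firstHit g T i) :
      (firstHit g T i).indicator (Y.indicator (1 : X → ℝ≥0∞)) ((g i)⁻¹ • x) = 0 := by
    rw [indicator_indicator, inter_comm, indicator_of_notMem hi]
  by_cases hx : ∃ i, (g i)⁻¹ • x ∈ Y ∩ firstHit g T i
  · obtain ⟨i, hi⟩ := hx
    rw [tsum_eq_single i fun k hki => hzero fun hk => hki
      (eq_and_smul_eq_of_mem_firstHit (h := 1) hY hi (by rwa [one_smul])).1.symm,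
      indicator_indicator, inter_comm, indicator_of_mem hi,
      indicator_of_mem (mem_of_inv_smul_mem_firstHit hi.2), Pi.one_apply, Pi.one_apply]
  · push Not at hx
    simp only [hzero (hx _), tsum_zero, zero_le]

end MassTransport

section OrbitMinima

/-- The points at which `φ` is within `δ` of its infimum over the orbit. -/
def almostOrbitMinima (G : Type*) {X : Type*} [Group G] [MulAction G X] (φ : X → ℝ) (δ : ℝ) :
    Set X :=
  ⋂ g : G, {x | φ x ≤ φ (g • x) + δ}

variable {φ : X → ℝ}

lemma measurableSet_almostOrbitMinima [Countable G] [mX : MeasurableSpace X]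
    (hX : InvariantAlg G mX) (hφ : Measurable φ) (δ : ℝ) :
    MeasurableSet (almostOrbitMinima G φ δ) :=
  .iInter fun g => measurableSet_le hφ ((hφ.comp (hX.measurable_smul g)).add_const δ)

lemma almostOrbitMinima_mono : Monotone (almostOrbitMinima G φ) := fun _ _ hδ =>
  iInter_mono fun _ _ hx => le_add_of_le_add_left hx hδ

lemma isPartialTransversal_almostOrbitMinima_zero (hφ : Injective φ) :
    IsPartialTransversal G (almostOrbitMinima G φ 0) := by
  intro x hx g hgx
  simp only [almostOrbitMinima, add_zero, mem_iInter, mem_ofPred_eq] at hx hgx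
  exact hφ (le_antisymm (by simpa using hgx g⁻¹) (hx g))

lemma saturation_almostOrbitMinima {δ : ℝ} (hδ : 0 < δ) (hφ : BddBelow (range φ)) :
    saturation G (almostOrbitMinima G φ δ) = univ := by
  refine eq_univ_of_forall fun x => ?_
  have hbdd : BddBelow (range fun g : G => φ (g • x)) :=
    hφ.mono (range_subset_iff.2 fun g => mem_range_self _)
  obtain ⟨g, hg⟩ := exists_lt_of_ciInf_lt (f := fun g : G => φ (g • x)) (lt_add_of_pos_right _ hδ)
  refine mem_iUnion.2 ⟨g, mem_iInter.2 fun h => hg.le.trans ?_⟩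
  gcongr
  simpa [mul_smul] using ciInf_le hbdd (h * g)

lemma iInter_almostOrbitMinima_one_div :
    ⋂ n : ℕ, almostOrbitMinima G φ (1 / (n + 1)) = almostOrbitMinima G φ 0 := by
  refine Subset.antisymm (fun x hx => mem_iInter.2 fun g => ?_)
    (subset_iInter fun n => almostOrbitMinima_mono (by positivity))
  refine le_of_forall_pos_le_add (α := ℝ) fun δ hδ => ?_
  obtain ⟨n, hn⟩ := exists_nat_one_div_lt hδ
  calc φ x ≤ φ (g • x) + 1 / (n + 1) := mem_iInter.1 (mem_iInter.1 hx n) g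
    _ ≤ φ (g • x) + 0 + δ := by rw [add_zero]; gcongr

lemma exists_measurable_injective_bddBelow (X : Type*) [MeasurableSpace X]
    [MeasurableSpace.CountablySeparated X] :
    ∃ φ : X → ℝ, Measurable φ ∧ Injective φ ∧ BddBelow (range φ) := by
  obtain ⟨f, hf, hf_inj⟩ := MeasurableSpace.measurable_injection_nat_bool_of_countablySeparated X
  have hemb := measurableEmbedding_embeddingReal (ℕ → Bool)
  refine ⟨Real.arctan ∘ embeddingReal (ℕ → Bool) ∘ f,
    Real.measurable_arctan.comp (hemb.measurable.comp hf),
    Real.arctan_injective.comp (hemb.injective.comp hf_inj), -(Real.pi / 2), ?_⟩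
  rintro _ ⟨x, rfl⟩
  exact (Real.neg_pi_div_two_lt_arctan _).le

lemma exists_completeSection_measure_le [Countable G] [mX : MeasurableSpace X]
    [MeasurableSpace.CountablySeparated X] (hX : InvariantAlg G mX) (μ : Measure X)
    [IsFiniteMeasure μ] :
    ∃ Y, MeasurableSet Y ∧ IsPartialTransversal G Y ∧ ∀ δ : ℝ≥0∞, 0 < δ →
      ∃ B, MeasurableSet B ∧ saturation G B = (saturation G Y)ᶜ ∧ μ B ≤ δ := by
  obtain ⟨φ, hφ, hφ_inj, hφ_bdd⟩ := exists_measurable_injective_bddBelow X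
  set Y := almostOrbitMinima G φ 0 with hYdef
  have hYm : MeasurableSet Y := measurableSet_almostOrbitMinima hX hφ 0
  refine ⟨Y, hYm, isPartialTransversal_almostOrbitMinima_zero hφ_inj, fun δ hδ => ?_⟩
  let B : ℕ → Set X := fun n => almostOrbitMinima G φ (1 / (n + 1)) ∩ (saturation G Y)ᶜ
  have hB (n : ℕ) : MeasurableSet (B n) :=
    (measurableSet_almostOrbitMinima hX hφ _).inter (hX.measurableSet_saturation hYm).compl
  have hanti : Antitone B := fun n k hnk =>
    inter_subset_inter_left _ (almostOrbitMinima_mono (Nat.one_div_le_one_div hnk))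
  have hempty : ⋂ n, B n = ∅ := by
    rw [← iInter_inter, iInter_almostOrbitMinima_one_div, ← hYdef]
    exact (disjoint_compl_right_iff_subset.2 (subset_saturation Y)).inter_eq
  have hlim := tendsto_measure_iInter_atTop (μ := μ) (fun n => (hB n).nullMeasurableSet) hanti
    ⟨0, measure_ne_top _ _⟩
  rw [hempty, measure_empty] at hlim
  obtain ⟨n, hn⟩ := (hlim.eventually_le_const hδ).exists
  refine ⟨B n, hB n, ?_, hn⟩
  rw [saturation_inter fun g => by rw [preimage_compl, preimage_smul_saturation],
    saturation_almostOrbitMinima Nat.one_div_pos_of_nat hφ_bdd, univ_inter]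

end OrbitMinima
end Action

/-! ### Ranking words by their cost -/

section CostRank

variable {X V : Type*} [Encodable V] {L : V → ℝ≥0∞} {v : V}

/-- The values cheaper than `v` for the cost function `L`, ties being broken by the encoding. -/
def cheaper {V : Type*} [Encodable V] (L : V → ℝ≥0∞) (v : V) : Set V :=
  {w | toLex (L w, Encodable.encode w) < toLex (L v, Encodable.encode v)}

/-- The position of `v`, starting from `0`, when all values are listed by increasing cost. -/
noncomputable def costRank {V : Type*} [Encodable V] (L : V → ℝ≥0∞) (v : V) : ℕ :=
  (cheaper L v).ncard

lemma insert_cheaper_subset (L : V → ℝ≥0∞) (v : V) :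
    insert v (cheaper L v) ⊆ {w | ennExpNeg (L v) ≤ ennExpNeg (L w)} := by
  rintro w (rfl | hw)
  · exact le_refl (ennExpNeg (L w))
  · exact ennExpNeg_antitone (Prod.Lex.monotone_fst_ofLex hw.le)

lemma notMem_cheaper (L : V → ℝ≥0∞) (v : V) : v ∉ cheaper L v :=
  lt_irrefl (toLex (L v, Encodable.encode v))

lemma finite_cheaper (hL : ∑' w, ennExpNeg (L w) ≤ 1) (hv : L v ≠ ⊤) : (cheaper L v).Finite :=
  (ENNReal.finite_const_le_of_tsum_ne_top (ne_top_of_le_ne_top ENNReal.one_ne_top hL)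
    (ennExpNeg_ne_zero hv)).subset ((subset_insert _ _).trans (insert_cheaper_subset L v))

/-- Each of the values listed up to `v` has weight at least `ennExpNeg (L v)`, and the total weight
is at most `1`. -/
lemma log_costRank_add_one_le (hL : ∑' w, ennExpNeg (L w) ≤ 1) :
    ENNReal.ofReal (Real.log (costRank L v + 1 : ℕ)) ≤ L v := by
  obtain hv | hv := eq_or_ne (L v) ⊤
  · rw [hv]
    exact le_top
  obtain ⟨hfin, hcard⟩ := ENNReal.finset_card_const_le_le_of_tsum_le ENNReal.one_ne_top hL
    (ennExpNeg_ne_zero hv)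
  have hrank : costRank L v + 1 ≤ hfin.toFinset.card := by
    rw [costRank, ← ncard_insert_of_notMem (notMem_cheaper L v) (finite_cheaper hL hv),
      ← ncard_eq_toFinset_card _ hfin]
    exact ncard_le_ncard (insert_cheaper_subset L v) hfin
  have hle : ((costRank L v + 1 : ℕ) : ℝ≥0∞) ≤ 1 / ennExpNeg (L v) :=
    (Nat.cast_le.2 hrank).trans hcard
  rw [← ENNReal.ofReal_toReal hv, ennExpNeg_ofReal ENNReal.toReal_nonneg, one_div,
    ← ENNReal.ofReal_inv_of_pos (Real.exp_pos _), ← Real.exp_neg, neg_neg,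
    ← ENNReal.ofReal_natCast, ENNReal.ofReal_le_ofReal_iff (Real.exp_pos _).le] at hle
  rw [← ENNReal.ofReal_toReal hv]
  exact ENNReal.ofReal_le_ofReal ((Real.log_le_iff_le_exp (by positivity)).2 hle)

lemma injOn_costRank (hL : ∑' w, ennExpNeg (L w) ≤ 1) : InjOn (costRank L) {v | L v ≠ ⊤} := by
  have hlt {v w : V} (hw : L w ≠ ⊤)
      (h : toLex (L v, Encodable.encode v) < toLex (L w, Encodable.encode w)) :
      costRank L v < costRank L w :=
    ncard_lt_ncard ⟨fun _ hu => lt_trans hu h, fun hsub => notMem_cheaper L v (hsub h)⟩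
      (finite_cheaper hL hw)
  intro v hv w hw hvw
  obtain h | h | h := lt_trichotomy (toLex (L v, Encodable.encode v))
    (toLex (L w, Encodable.encode w))
  · exact absurd hvw (hlt hw h).ne
  · exact Encodable.encode_injective (Prod.ext_iff.1 (toLex.injective h)).2
  · exact absurd hvw (hlt hv h).ne'

lemma measurable_costRank [mX : MeasurableSpace X] {L : X → V → ℝ≥0∞}
    (hL : ∀ v, Measurable fun x => L x v) (v : V) : Measurable fun x => costRank (L x) v := by
  refine measurable_ncard.comp (measurable_set_iff.2 fun w => measurableSet_setOfPred.1 ?_)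
  simp only [cheaper, mem_ofPred_eq, Prod.Lex.toLex_lt_toLex]
  exact (measurableSet_lt (hL w) (hL v)).union
    ((measurableSet_eq_fun (hL w) (hL v)).inter (.const _))

end CostRank

/-! ### Coding a labelling on a complete section -/

section Coding

/-- The discrete σ-algebra on the countable set of words, which are eventually zero sequences. -/
instance wordMeasurableSpace : MeasurableSpace (ℕ →₀ ℕ) := ⊤

instance discreteMeasurableSpace_word : DiscreteMeasurableSpace (ℕ →₀ ℕ) := ⟨fun _ => trivial⟩

lemma exists_measurable_word {X : Type*} [MeasurableSpace X] {μ : Measure X} {u : ℕ → X → ℕ}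
    (hu : ∀ i, Measurable (u i)) (hfin : ∀ᵐ x ∂μ, (support fun i => u i x).Finite) :
    ∃ c : X → ℕ →₀ ℕ, Measurable c ∧ ∀ᵐ x ∂μ, ∀ i, c x i = u i x := by
  have hcoe : MeasurableEmbedding ((⇑) : (ℕ →₀ ℕ) → ℕ → ℕ) :=
    Measurable.of_discrete.measurableEmbedding DFunLike.coe_injective
  obtain ⟨r, hr, hrcoe⟩ := hcoe.exists_measurable_extend measurable_id fun _ => ⟨0⟩
  refine ⟨fun x => r fun i => u i x, hr.comp (measurable_pi_iff.2 hu), ?_⟩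
  filter_upwards [hfin] with x hx i
  exact DFunLike.congr_fun (congr_fun hrcoe (Finsupp.ofSupportFinite _ hx)) i

variable {G X : Type*} [Group G] [MulAction G X] {B : Set X} {a : X → ℕ} {g : ℕ → G}
  {p : ℕ → X → ℝ≥0∞} {lab : X → ℕ}

/-- Every point sends its label to the first of its translates in `B`; this is the symbol that `x`
receives from `(g i)⁻¹ • x`, or `0` if nothing is sent from there. -/
noncomputable def receivedSymbol (g : ℕ → G) (B : Set X) (a : X → ℕ) (i : ℕ) (x : X) : ℕ :=
  (firstHit g B i).indicator a ((g i)⁻¹ • x)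

open Classical in
/-- The cost of receiving at `x` the symbol `j` from `(g i)⁻¹ • x`, when the label `j` has
probability `p j y` at the point `y`. -/
noncomputable def symbolCost (g : ℕ → G) (B : Set X) (p : ℕ → X → ℝ≥0∞) (x : X) (i j : ℕ) :
    ℝ≥0∞ :=
  if (g i)⁻¹ • x ∈ firstHit g B i then ennNegLog (p j ((g i)⁻¹ • x)) else if j = 0 then 0 else ⊤

/-- The cost of receiving the word `w` at `x`. -/
noncomputable def wordCost (g : ℕ → G) (B : Set X) (p : ℕ → X → ℝ≥0∞) (x : X) (w : ℕ →₀ ℕ) :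
    ℝ≥0∞ :=
  ∑' i, symbolCost g B p x i (w i)

/-- The points whose label is one more than the rank of `w`, a word of finite cost. -/
def decodeSet (g : ℕ → G) (B : Set X) (p : ℕ → X → ℝ≥0∞) (lab : X → ℕ) (w : ℕ →₀ ℕ) : Set X :=
  {x | lab x = costRank (wordCost g B p x) w + 1 ∧ wordCost g B p x w ≠ ⊤}

/-- The label at a point of `B` is one more than the rank of the word received there. -/
noncomputable def rankLabel (g : ℕ → G) (B : Set X) (p : ℕ → X → ℝ≥0∞) (c : X → ℕ →₀ ℕ) : X → ℕ :=
  B.indicator fun x => costRank (wordCost g B p x) (c x) + 1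

lemma wordCost_of_received {x : X} {w : ℕ →₀ ℕ} (hw : ∀ i, w i = receivedSymbol g B a i x) :
    wordCost g B p x w =
      ∑' i, (firstHit g B i).indicator (fun y => ennNegLog (p (a y) y)) ((g i)⁻¹ • x) := by
  refine tsum_congr fun i => ?_
  by_cases hi : (g i)⁻¹ • x ∈ firstHit g B i
  · simp only [symbolCost, if_pos hi, hw, receivedSymbol, indicator_of_mem hi]
  · simp only [symbolCost, if_neg hi, hw, receivedSymbol, indicator_of_notMem hi, if_true]

lemma tsum_ennExpNeg_wordCost_le_one {x : X} (h : ∀ h : G, ∑' j, p j (h • x) = 1) :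
    ∑' w, ennExpNeg (wordCost g B p x w) ≤ 1 := by
  refine tsum_ennExpNeg_tsum_le_one (symbolCost g B p x) fun i => ?_
  by_cases hi : (g i)⁻¹ • x ∈ firstHit g B i
  · simp only [symbolCost, if_pos hi]
    rw [← h (g i)⁻¹]
    refine le_of_eq (tsum_congr fun j => ennExpNeg_ennNegLog ?_)
    exact (ENNReal.le_tsum (f := fun j => p j ((g i)⁻¹ • x)) j).trans_eq (h (g i)⁻¹)
  · rw [tsum_eq_single 0 fun j hj => by
      simp only [symbolCost, if_neg hi, if_neg hj, ennExpNeg_top]]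
    simp only [symbolCost, if_neg hi, if_true, ennExpNeg_zero, le_refl]

section Measurability

variable {m : MeasurableSpace X}

lemma measurable_wordCost (hm : InvariantAlg G m) (hB : MeasurableSet[m] B)
    (hp : ∀ j, Measurable[m] (p j)) (w : ℕ →₀ ℕ) :
    Measurable[m] fun x => wordCost g B p x w := by
  refine measurable_tsum_apply fun i => ?_
  have hsmul := hm.measurable_smul (g i)⁻¹
  exact Measurable.ite (hsmul (hm.measurableSet_firstHit g hB i))
    (measurable_ennNegLog.comp ((hp (w i)).comp hsmul)) measurable_const

lemma measurableSet_decodeSet (hm : InvariantAlg G m) (hB : MeasurableSet[m] B)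
    (hp : ∀ j, Measurable[m] (p j)) (hlab : Measurable[m] lab) (w : ℕ →₀ ℕ) :
    MeasurableSet[m] (decodeSet g B p lab w) :=
  (measurableSet_eq_fun hlab
    ((measurable_costRank (measurable_wordCost hm hB hp) w).add_const 1)).inter
    (measurable_wordCost hm hB hp w (measurableSet_singleton ⊤).compl)

lemma measurable_rankLabel (hm : InvariantAlg G m) (hB : MeasurableSet[m] B)
    (hp : ∀ j, Measurable[m] (p j)) {c : X → ℕ →₀ ℕ} (hc : Measurable[m] c) :
    Measurable[m] (rankLabel g B p c) := by
  have huncurry : Measurable fun q : (ℕ →₀ ℕ) × X => costRank (wordCost g B p q.2) q.1 + 1 :=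
    measurable_from_prod_countable_right fun w =>
      (measurable_costRank (measurable_wordCost hm hB hp) w).add_const 1
  exact (huncurry.comp (hc.prodMk measurable_id)).indicator hB

end Measurability

/-- At `x` the word `c x` is the received one and its rank among all words determines it. -/
structure IsDecodableAt (g : ℕ → G) (B : Set X) (a : X → ℕ) (p : ℕ → X → ℝ≥0∞) (c : X → ℕ →₀ ℕ)
    (x : X) : Prop where
  kraft : ∑' w, ennExpNeg (wordCost g B p x w) ≤ 1
  received : ∀ i, c x i = receivedSymbol g B a i x
  cost_ne_top : wordCost g B p x (c x) ≠ ⊤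

variable {c : X → ℕ →₀ ℕ}

lemma IsDecodableAt.mem_decodeSet_rankLabel_iff {x : X} (hx : IsDecodableAt g B a p c x)
    (hxB : x ∈ B) {w : ℕ →₀ ℕ} : x ∈ decodeSet g B p (rankLabel g B p c) w ↔ w = c x := by
  simp only [decodeSet, rankLabel, mem_ofPred_eq, indicator_of_mem hxB, add_left_inj]
  refine ⟨fun h => (injOn_costRank hx.kraft hx.cost_ne_top h.2 h.1).symm, ?_⟩
  rintro rfl
  exact ⟨rfl, hx.cost_ne_top⟩

lemma mem_iUnion_decodeSet_iff {x : X} (hx : ∀ h : G, IsDecodableAt g B a p c (h • x))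
    (hg : Surjective g) (j : ℕ) :
    x ∈ ⋃ i, firstHit g B i ∩
        (fun x => g i • x) ⁻¹' ⋃ w ∈ {w : ℕ →₀ ℕ | w i = j}, decodeSet g B p (rankLabel g B p c) w ↔
      x ∈ a ⁻¹' {j} ∩ saturation G B := by
  have hkey {i : ℕ} (hi : x ∈ firstHit g B i) :
      (g i • x ∈ ⋃ w ∈ {w : ℕ →₀ ℕ | w i = j}, decodeSet g B p (rankLabel g B p c) w) ↔
        a x = j := by
    simp only [mem_iUnion₂, (hx (g i)).mem_decodeSet_rankLabel_iff (smul_mem_of_mem_firstHit hi),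
      exists_prop, exists_eq_right, mem_ofPred_eq, (hx (g i)).received, receivedSymbol,
      inv_smul_smul, indicator_of_mem hi]
  rw [← iUnion_firstHit hg, mem_inter_iff, mem_iUnion, mem_iUnion]
  exact ⟨fun ⟨i, hi, hi'⟩ => ⟨(hkey hi).1 hi', i, hi⟩,
    fun ⟨hxj, i, hi⟩ => ⟨i, hi, (hkey hi).2 hxj⟩⟩

section Measure

variable {A mX : MeasurableSpace X} {μ : Measure[mX] X}

/-- Modulo null sets, the labelling `a` on `Q` can be recovered from the translates of the
labelling `lab` together with `A`. -/
def DecodesOn (G : Type*) {X : Type*} [Group G] [MulAction G X] {mX : MeasurableSpace X}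
    (A : MeasurableSpace X) (μ : Measure[mX] X) (lab a : X → ℕ) (Q : Set X) : Prop :=
  ∀ m : MeasurableSpace X, InvariantAlg G m → A ≤ aeCompletion m μ →
    Measurable[aeCompletion m μ] lab → ∀ j, MeasurableSet[aeCompletion m μ] (a ⁻¹' {j} ∩ Q)

lemma decodesOn_rankLabel [Countable G] (hpmp : IsPmp G μ) (hg : Surjective g)
    (hdec : ∀ᵐ x ∂μ, IsDecodableAt g B a (fun j => condProb A μ (a ⁻¹' {j})) c x) :
    DecodesOn G A μ (rankLabel g B (fun j => condProb A μ (a ⁻¹' {j})) c) a (saturation G B) := by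
  have hdec_orbit : ∀ᵐ x ∂μ, ∀ h : G,
      IsDecodableAt g B a (fun j => condProb A μ (a ⁻¹' {j})) c (h • x) :=
    ae_all_iff.2 fun h => (hpmp h).quasiMeasurePreserving.ae hdec
  intro m hm hAm hlab j
  have hinv := hpmp.invariantAlg_aeCompletion hm
  set lab := rankLabel g B (fun j => condProb A μ (a ⁻¹' {j})) c with hlabdef
  have hB : MeasurableSet[aeCompletion m μ] B := by
    have hsupp : lab ⁻¹' {0}ᶜ = B := by
      ext x
      simp [hlabdef, rankLabel]
    rw [← hsupp]
    exact hlab (measurableSet_singleton 0).compl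
  have hset := MeasurableSet.iUnion fun i => (hinv.measurableSet_firstHit g hB i).inter <|
    hinv (g i) _ <| MeasurableSet.biUnion (to_countable {w : ℕ →₀ ℕ | w i = j}) fun w _ =>
      measurableSet_decodeSet (g := g) hinv hB
        (fun j => (measurable_condProb A μ (a ⁻¹' {j})).mono hAm le_rfl) hlab w
  refine EventuallyMeasurableSet.congr hset (Filter.eventuallyEq_set.2 ?_)
  filter_upwards [hdec_orbit] with x hx
  exact (mem_iUnion_decodeSet_iff hx hg j).symm

variable [IsFiniteMeasure μ]

lemma exists_measurable_receivedWord (hpmp : IsPmp G μ) (hg : Surjective g)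
    (hB : MeasurableSet[mX] B) (ha : Measurable[mX] a) :
    ∃ c : X → ℕ →₀ ℕ, Measurable[mX] c ∧ ∀ᵐ x ∂μ, ∀ i, c x i = receivedSymbol g B a i x := by
  have hhit := hpmp.invariantAlg.measurableSet_firstHit g hB
  have hfinite : ∫⁻ x, ∑' i, (firstHit g B i).indicator (1 : X → ℝ≥0∞) ((g i)⁻¹ • x) ∂μ ≠ ⊤ := by
    rw [hpmp.lintegral_tsum_firstHit hg hB measurable_one]
    simp only [Pi.one_apply, setLIntegral_one]
    exact measure_ne_top μ _
  refine exists_measurable_word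
    (fun i => (ha.indicator (hhit i)).comp (hpmp (g i)⁻¹).measurable) ?_
  have hmeas : Measurable[mX] fun x => ∑' i, (firstHit g B i).indicator (1 : X → ℝ≥0∞)
      ((g i)⁻¹ • x) := measurable_tsum_apply fun i =>
    (measurable_one.indicator (hhit i)).comp (hpmp (g i)⁻¹).measurable
  filter_upwards [ae_lt_top hmeas hfinite] with x hx
  refine (ENNReal.finite_const_le_of_tsum_ne_top hx.ne one_ne_zero).subset fun i hi => ?_
  simp only [mem_ofPred_eq, indicator_of_mem (mem_of_indicator_ne_zero hi), Pi.one_apply, le_refl]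

lemma ae_forall_tsum_condProb_smul [Countable G] (hpmp : IsPmp G μ) (hA : A ≤ mX)
    (ha : Measurable[mX] a) :
    ∀ᵐ x ∂μ, ∀ h : G, ∑' j, condProb A μ (a ⁻¹' {j}) (h • x) = 1 :=
  ae_all_iff.2 fun h =>
    (hpmp h).quasiMeasurePreserving.ae (tsum_condProb_preimage_singleton hA ha)

lemma lintegral_wordCost (hpmp : IsPmp G μ) (hA : A ≤ mX) (hg : Surjective g)
    (hB : MeasurableSet[mX] B) (ha : Measurable[mX] a) (hQ : MeasurableSet[A] (saturation G B))
    (hc : ∀ᵐ x ∂μ, ∀ i, c x i = receivedSymbol g B a i x) :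
    ∫⁻ x, wordCost g B (fun j => condProb A μ (a ⁻¹' {j})) x (c x) ∂μ =
      ∫⁻ x in saturation G B, condEntFn A μ a x ∂μ := by
  rw [← setLIntegral_condInfo hA ha hQ,
    ← hpmp.lintegral_tsum_firstHit hg hB (measurable_condInfo hA ha)]
  refine lintegral_congr_ae ?_
  filter_upwards [hc] with x hx using wordCost_of_received hx

lemma ae_isDecodableAt [Countable G] (hpmp : IsPmp G μ) (hA : A ≤ mX) (hg : Surjective g)
    (hB : MeasurableSet[mX] B) (ha : Measurable[mX] a) (hQ : MeasurableSet[A] (saturation G B))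
    (hfin : ∫⁻ x in saturation G B, condEntFn A μ a x ∂μ ≠ ⊤) (hcm : Measurable[mX] c)
    (hc : ∀ᵐ x ∂μ, ∀ i, c x i = receivedSymbol g B a i x) :
    ∀ᵐ x ∂μ, IsDecodableAt g B a (fun j => condProb A μ (a ⁻¹' {j})) c x := by
  have hcost : Measurable[mX] fun x => wordCost g B (fun j => condProb A μ (a ⁻¹' {j})) x (c x) :=
    Measurable.comp (g := fun q : (ℕ →₀ ℕ) × X =>
        wordCost g B (fun j => condProb A μ (a ⁻¹' {j})) q.2 q.1)
      (measurable_from_prod_countable_right <| measurable_wordCost hpmp.invariantAlg hB fun j =>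
        (measurable_condProb A μ _).mono hA le_rfl) (hcm.prodMk measurable_id)
  rw [← lintegral_wordCost hpmp hA hg hB ha hQ hc] at hfin
  filter_upwards [ae_forall_tsum_condProb_smul hpmp hA ha, hc, ae_lt_top hcost hfin]
    with x hsum hx htop
  exact ⟨tsum_ennExpNeg_wordCost_le_one hsum, hx, htop.ne⟩

/-- Every point of `B` records the rank of the word it receives, the words being ordered by their
conditional cost given `A`; rank `k` costs at most `log (k + 1)`. -/
theorem exists_labelling_decodesOn [Countable G] (hpmp : IsPmp G μ) (hA : A ≤ mX)
    (ha : Measurable[mX] a) (hB : MeasurableSet[mX] B) (hQ : MeasurableSet[A] (saturation G B))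
    (hfin : ∫⁻ x in saturation G B, condEntFn A μ a x ∂μ ≠ ⊤) :
    ∃ lab : X → ℕ, Measurable[mX] lab ∧ (∀ x, lab x = 0 ↔ x ∉ B) ∧
      ∫⁻ x in B, ENNReal.ofReal (Real.log (lab x)) ∂μ ≤
        ∫⁻ x in saturation G B, condEntFn A μ a x ∂μ ∧
      DecodesOn G A μ lab a (saturation G B) := by
  obtain ⟨g, hg⟩ := exists_surjective_nat G
  obtain ⟨c, hcm, hc⟩ := exists_measurable_receivedWord hpmp hg hB ha
  refine ⟨rankLabel g B (fun j => condProb A μ (a ⁻¹' {j})) c,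
    measurable_rankLabel hpmp.invariantAlg hB
      (fun j => (measurable_condProb A μ _).mono hA le_rfl) hcm, fun x => by simp [rankLabel], ?_,
    decodesOn_rankLabel hpmp hg (ae_isDecodableAt hpmp hA hg hB ha hQ hfin hcm hc)⟩
  rw [← lintegral_wordCost hpmp hA hg hB ha hQ hc]
  refine (setLIntegral_mono_ae' hB ?_).trans (setLIntegral_le_lintegral B _)
  filter_upwards [ae_forall_tsum_condProb_smul hpmp hA ha] with x hsum hxB
  rw [rankLabel, indicator_of_mem hxB]
  exact log_costRank_add_one_le (tsum_ennExpNeg_wordCost_le_one hsum)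

end Measure
end Coding

/-! ### Towers of σ-algebras generated by labellings -/

section Labelling

variable {G X V : Type*} [Group G] [MulAction G X] {m mX : MeasurableSpace X}
  {μ ν : Measure[mX] X} {a : X → V}

/-- The smallest `G`-invariant σ-algebra containing the cells of a labelling. -/
abbrev labelSigma (G : Type*) {X V : Type*} [Group G] [MulAction G X] (a : X → V) :
    MeasurableSpace X :=
  sigmaG G (range fun v => a ⁻¹' {v})

lemma labelSigma_le [MeasurableSpace V] [MeasurableSingletonClass V] (hm : InvariantAlg G m)
    (ha : Measurable[m] a) : labelSigma G a ≤ m :=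
  sigmaG_le hm <| forall_mem_range.2 fun v => ha (measurableSet_singleton v)

lemma measurable_labelSigma [Countable V] [MeasurableSpace V] [MeasurableSingletonClass V]
    (a : X → V) : Measurable[labelSigma G a] a :=
  @measurable_to_countable' V X _ _ (labelSigma G a) a fun v =>
    measurableSet_sigmaG_of_mem (mem_range_self v)

lemma aeCompletion_le_of_absolutelyContinuous (m : MeasurableSpace X) (hνμ : ν ≪ μ) :
    aeCompletion m μ ≤ aeCompletion m ν := by
  rintro s ⟨t, ht, hst⟩
  exact ⟨t, ht, hνμ.ae_eq hst⟩

lemma preimage_smul_of_measurableSet_invSigma {P : Set X} (hP : MeasurableSet[invSigma G X] P)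
    (g : G) : (fun x => g • x) ⁻¹' P = P := by
  induction P, hP using MeasurableSpace.generateFrom_induction with
  | hC P hP _ => exact hP.2 g
  | empty => rfl
  | compl P _ ih => rw [preimage_compl, ih]
  | iUnion P _ ih => simp only [preimage_iUnion, ih]

lemma IsPmp.restrict (hpmp : IsPmp G μ) {P : Set X} (hP : MeasurableSet[invSigma G X] P) :
    IsPmp G (μ.restrict P) := fun g => by
  simpa only [preimage_smul_of_measurableSet_invSigma hP g] using
    (hpmp g).restrict_preimage (invSigma_le P hP)

/-- A sequence of σ-algebras `A n`, none smaller than the invariant σ-algebra `A 0`, each of which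
is generated modulo null sets by the previous one and the translates of a labelling `a n`. -/
structure IsLabelledTower (G : Type*) {X : Type*} [Group G] [MulAction G X] {mX : MeasurableSpace X}
    (μ : Measure[mX] X) (A : ℕ → MeasurableSpace X) (a : ℕ → X → ℕ) : Prop where
  le (n : ℕ) : A n ≤ mX
  base_le (n : ℕ) : A 0 ≤ A n
  invariantAlg_base : InvariantAlg G (A 0)
  invSigma_le_base : invSigma G X ≤ A 0
  measurable (n : ℕ) : Measurable[mX] (a n)
  succ_le (n : ℕ) : A (n + 1) ≤ aeCompletion (labelSigma G (a n) ⊔ A n) μ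

lemma IsLabelledTower.le_aeCompletion_of_measurable {A : ℕ → MeasurableSpace X} {a : ℕ → X → ℕ}
    (hT : IsLabelledTower G μ A a) (hν : IsPmp G ν) (hνμ : ν ≪ μ) (hm : InvariantAlg G m)
    (h0 : A 0 ≤ aeCompletion m ν) (n : ℕ)
    (ha : ∀ k < n, A k ≤ aeCompletion m ν → Measurable[aeCompletion m ν] (a k)) :
    A n ≤ aeCompletion m ν := by
  induction n with
  | zero => exact h0
  | succ n ih =>
    have hAn := ih fun k hk => ha k (hk.trans n.lt_succ_self)
    calc A (n + 1) ≤ aeCompletion (labelSigma G (a n) ⊔ A n) μ := hT.succ_le n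
      _ ≤ aeCompletion (labelSigma G (a n) ⊔ A n) ν :=
        aeCompletion_le_of_absolutelyContinuous _ hνμ
      _ ≤ aeCompletion m ν := aeCompletion_le_of_le <|
        sup_le (labelSigma_le (hν.invariantAlg_aeCompletion hm) (ha n n.lt_succ_self hAn)) hAn

end Labelling

/-! ### The smooth part of the action -/

section Transversal

variable {G X : Type*} [Group G] [MulAction G X] {m mX : MeasurableSpace X}
  {μ : Measure[mX] X} {Y s D : Set X}

/-- The points of the orbit of `y ∈ Y` that lie in `s` are the `g⁻¹ • y` such that `y` belongs to
the invariant saturation of `Y ∩ (fun x => g⁻¹ • x) ⁻¹' s`. -/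
lemma IsPartialTransversal.measurableSet_inter_saturation [Countable G]
    (hY : IsPartialTransversal G Y) (hX : InvariantAlg G mX) (hI : invSigma G X ≤ m)
    (hm : InvariantAlg G m) (hYX : MeasurableSet[mX] Y) (hYm : MeasurableSet[m] Y)
    (hs : MeasurableSet[mX] s) : MeasurableSet[m] (s ∩ saturation G Y) := by
  have hcover : s ∩ saturation G Y = ⋃ g : G, (fun x => g • x) ⁻¹' Y ∩
      saturation G (Y ∩ (fun x => g⁻¹ • x) ⁻¹' s) := by
    refine Subset.antisymm ?_ (iUnion_subset ?_)
    · rintro x ⟨hxs, hx⟩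
      obtain ⟨g, hg⟩ := mem_iUnion.1 hx
      exact mem_iUnion.2 ⟨g, hg, mem_iUnion.2 ⟨g, hg, by simpa using hxs⟩⟩
    · rintro g x ⟨hg, hx⟩
      obtain ⟨h, hh, hhs⟩ := mem_iUnion.1 hx
      have hgh : h • x = g • x := by
        simpa [mul_smul] using hY (g • x) hg (h * g⁻¹) (by simpa [mul_smul] using hh)
      exact ⟨by simpa [hgh] using hhs, mem_iUnion.2 ⟨g, hg⟩⟩
  rw [hcover]
  exact MeasurableSet.iUnion fun g => MeasurableSet.inter (hm g _ hYm)
    (hI _ (hX.measurableSet_saturation_invSigma (MeasurableSet.inter hYX (hX g⁻¹ _ hs))))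

variable [Countable G] [IsFiniteMeasure μ]

lemma IsPartialTransversal.measure_inter_le (hY : IsPartialTransversal G Y) (hpmp : IsPmp G μ)
    (hI : invSigma G X ≤ m) (hm : m ≤ mX) (hYX : MeasurableSet[mX] Y) (hs : MeasurableSet[mX] s)
    (hD : MeasurableSet[m] D) (hpos : ∀ x ∈ D, condProb m μ s x ≠ 0) :
    μ (Y ∩ D) ≤ μ (s ∩ D) := by
  have hsD : MeasurableSet[mX] (s ∩ D) := hs.inter (hm _ hD)
  have hout : MeasurableSet[m] (D \ saturation G (s ∩ D)) :=
    hD.diff (hI _ (hpmp.invariantAlg.measurableSet_saturation_invSigma hsD))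
  have hempty : s ∩ (D \ saturation G (s ∩ D)) = ∅ := by
    rw [← inter_sdiff_assoc, sdiff_eq_empty]
    exact subset_saturation _
  have hzero := condProb_eq_zero_of_measure_inter_eq_zero (μ := μ) hm hs hout
    (by rw [hempty, measure_empty])
  refine (measure_mono_ae ?_).trans (hpmp.measure_inter_saturation_le hYX hY hsD)
  filter_upwards [hzero] with x hx hxD
  refine ⟨hxD.1, ?_⟩
  by_contra hxs
  exact hpos x hxD.2 (hx ⟨hxD.2, hxs⟩)

lemma IsPartialTransversal.condProb_le (hY : IsPartialTransversal G Y) (hpmp : IsPmp G μ)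
    (hI : invSigma G X ≤ m) (hm : m ≤ mX) (hYX : MeasurableSet[mX] Y) (hs : MeasurableSet[mX] s) :
    ∀ᵐ x ∂μ, condProb m μ s x ≠ 0 → condProb m μ Y x ≤ condProb m μ s x := by
  let D : Set X := {x | condProb m μ s x ≠ 0 ∧ condProb m μ s x < condProb m μ Y x}
  have hD : MeasurableSet[m] D :=
    MeasurableSet.inter ((measurable_condProb m μ s) (measurableSet_singleton 0).compl)
      (measurableSet_lt (measurable_condProb m μ s) (measurable_condProb m μ Y))
  have hnull : μ D = 0 := by
    by_contra hne
    have hlt : ∫⁻ x in D, condProb m μ s x ∂μ < ∫⁻ x in D, condProb m μ Y x ∂μ :=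
      setLIntegral_strict_mono (hm _ hD) hne ((measurable_condProb m μ Y).mono hm le_rfl)
        (by rw [setLIntegral_condProb hm hs hD]; exact measure_ne_top _ _)
        (Filter.Eventually.of_forall fun x hx => hx.2)
    rw [setLIntegral_condProb hm hs hD, setLIntegral_condProb hm hYX hD] at hlt
    exact hlt.not_ge (hY.measure_inter_le hpmp hI hm hYX hs hD fun x hx => hx.1)
  filter_upwards [measure_eq_zero_iff_ae_notMem.1 hnull] with x hx hpos
  exact not_lt.1 fun hlt => hx ⟨hpos, hlt⟩

end Transversal

section Undetermined

variable {X V : Type*} {m mX : MeasurableSpace X} {μ : Measure[mX] X} {a : X → V}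

/-- The set of points at which the label `a x` is not determined by the σ-algebra `m`. -/
def undetermined {X V : Type*} {mX : MeasurableSpace X} (m : MeasurableSpace X) (μ : Measure[mX] X)
    (a : X → V) : Set X :=
  {x | ∃ v, condProb m μ (a ⁻¹' {v}) x ≠ 0 ∧ condProb m μ (a ⁻¹' {v}) x ≠ 1}

variable [Countable V]

lemma measurableSet_undetermined (m : MeasurableSpace X) (μ : Measure[mX] X) (a : X → V) :
    MeasurableSet[m] (undetermined m μ a) := by
  simp only [undetermined, ofPred_exists]
  exact MeasurableSet.iUnion fun v => MeasurableSet.inter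
    (measurable_condProb m μ _ (measurableSet_singleton 0).compl)
    (measurable_condProb m μ _ (measurableSet_singleton 1).compl)

variable [MeasurableSpace V] [MeasurableSingletonClass V] [IsFiniteMeasure μ]

lemma measurableSet_preimage_sdiff_undetermined (hm : m ≤ mX) (ha : Measurable[mX] a) (v : V) :
    MeasurableSet[aeCompletion m μ] (a ⁻¹' {v} \ undetermined m μ a) := by
  refine ⟨{x | condProb m μ (a ⁻¹' {v}) x = 1} \ undetermined m μ a,
    MeasurableSet.diff (measurable_condProb m μ _ (measurableSet_singleton 1))
      (measurableSet_undetermined m μ a), Filter.eventuallyEq_set.2 ?_⟩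
  filter_upwards [ae_mem_iff_condProb_eq_one (μ := μ) hm (ha (measurableSet_singleton v))]
    with x hx
  refine and_congr_left fun hxu => hx ?_
  by_contra! h
  exact hxu ⟨v, h⟩

lemma IsPartialTransversal.binEntropy_condProb_le_condEntFn {G : Type*} [Group G] [Countable G]
    [MulAction G X] {Y : Set X} (hY : IsPartialTransversal G Y) (hpmp : IsPmp G μ)
    (hI : invSigma G X ≤ m) (hm : m ≤ mX) (hYX : MeasurableSet[mX] Y) (ha : Measurable[mX] a) :
    ∀ᵐ x ∂μ, x ∈ undetermined m μ a →
      ennNegMulLog (condProb m μ Y x) + ennNegMulLog (1 - condProb m μ Y x) ≤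
        condEntFn m μ a x := by
  have hcell (v : V) : MeasurableSet[mX] (a ⁻¹' {v}) := ha (measurableSet_singleton v)
  have hcompl := ae_all_iff.2 fun v => condProb_add_condProb_compl (μ := μ) hm (hcell v)
  have hle := ae_all_iff.2 fun v => hY.condProb_le hpmp hI hm hYX (hcell v)
  have hle' := ae_all_iff.2 fun v => hY.condProb_le hpmp hI hm hYX (hcell v).compl
  filter_upwards [tsum_condProb_preimage_singleton (μ := μ) hm ha, hcompl, hle, hle']
    with x hsum hcompl hle hle'
  rintro ⟨v, hv0, hv1⟩
  have hv : condProb m μ (a ⁻¹' {v})ᶜ x = 1 - condProb m μ (a ⁻¹' {v}) x := by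
    rw [← hcompl v, ENNReal.add_sub_cancel_left]
    exact ne_top_of_le_ne_top ENNReal.one_ne_top (le_self_add.trans (hcompl v).le)
  refine ennNegMulLog_add_one_sub_le_tsum hsum (hle v hv0) (hv ▸ hle' v fun h => hv1 ?_)
  rw [← hcompl v, h, add_zero]

end Undetermined

section SmoothPart

variable {G X : Type*} [Group G] [MulAction G X] {mX : MeasurableSpace X}
  {μ : Measure[mX] X} [IsFiniteMeasure μ] {A : ℕ → MeasurableSpace X} {a : ℕ → X → ℕ}
  {R Y Y₀ : Set X}

lemma IsLabelledTower.le_aeCompletion_restrict (hT : IsLabelledTower G μ A a) (hpmp : IsPmp G μ)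
    (hR : MeasurableSet[invSigma G X] R) {n : ℕ}
    (hdet : ∀ k < n, Disjoint R (undetermined (A k) μ (a k))) :
    A n ≤ aeCompletion (A 0) (μ.restrict R) := by
  refine hT.le_aeCompletion_of_measurable (hpmp.restrict hR)
    Measure.restrict_le_self.absolutelyContinuous hT.invariantAlg_base (le_aeCompletion _ _)
    n fun k hk hAk => ?_
  refine @measurable_to_countable' ℕ X _ _ (aeCompletion (A 0) (μ.restrict R)) (a k) fun j => ?_
  have hcell := measurableSet_preimage_sdiff_undetermined (μ := μ) (hT.le k) (hT.measurable k) j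
  have hle : aeCompletion (A k) μ ≤ aeCompletion (A 0) (μ.restrict R) :=
    (aeCompletion_le_of_absolutelyContinuous _
      Measure.restrict_le_self.absolutelyContinuous).trans (aeCompletion_le_of_le hAk)
  refine EventuallyMeasurableSet.congr (hle _ hcell) (Filter.eventuallyEq_set.2 ?_)
  filter_upwards [ae_restrict_mem (invSigma_le R hR)] with x hx
  exact (and_iff_left (disjoint_left.1 (hdet k hk) hx)).symm

variable [Countable G]

lemma IsLabelledTower.binEntropy_condProb_le_condEntFn (hT : IsLabelledTower G μ A a)
    (hpmp : IsPmp G μ) (hYX : MeasurableSet[mX] Y) (hY : IsPartialTransversal G Y)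
    (hR : MeasurableSet[invSigma G X] R) {n : ℕ}
    (hdet : ∀ k < n, Disjoint R (undetermined (A k) μ (a k)))
    (hYR : Y ∩ R ⊆ undetermined (A n) μ (a n)) :
    ∀ᵐ x ∂μ, x ∈ R →
      ennNegMulLog (condProb (A 0) μ Y x) + ennNegMulLog (1 - condProb (A 0) μ Y x) ≤
        condEntFn (A n) μ (a n) x := by
  have hI : invSigma G X ≤ A n := hT.invSigma_le_base.trans (hT.base_le n)
  have hcond := condProb_eq_of_le_aeCompletion_restrict (hT.base_le n) (hT.le n) hYX
    (hT.invSigma_le_base R hR) (hT.le_aeCompletion_restrict hpmp hR hdet)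
  have hoff : Y ∩ (R \ undetermined (A n) μ (a n)) = ∅ := by
    rw [← inter_sdiff_assoc, sdiff_eq_empty]
    exact hYR
  have hzero := condProb_eq_zero_of_measure_inter_eq_zero (μ := μ) (hT.le n) hYX
    (MeasurableSet.diff (hI R hR) (measurableSet_undetermined (A n) μ (a n)))
    (by rw [hoff, measure_empty])
  filter_upwards [hcond, hzero,
    hY.binEntropy_condProb_le_condEntFn hpmp hI (hT.le n) hYX (hT.measurable n)]
    with x hcond hzero hent hxR
  rw [← hcond hxR]
  by_cases hx : x ∈ undetermined (A n) μ (a n)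
  · exact hent hx
  · simp [hzero ⟨hxR, hx⟩, ennNegMulLog]

/-- The transversal selects a point on each orbit of `saturation G Y₀` at the first storey where
the labels are not determined. -/
lemma IsLabelledTower.exists_isPartialTransversal_binEntropy_le (hT : IsLabelledTower G μ A a)
    (hpmp : IsPmp G μ) (hY₀X : MeasurableSet[mX] Y₀) (hY₀ : IsPartialTransversal G Y₀) :
    ∃ Y, MeasurableSet[mX] Y ∧ IsPartialTransversal G Y ∧
      saturation G Y = (⋃ n, saturation G (undetermined (A n) μ (a n))) ∩ saturation G Y₀ ∧
      ∀ᵐ x ∂μ, ennNegMulLog (condProb (A 0) μ Y x) + ennNegMulLog (1 - condProb (A 0) μ Y x) ≤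
        ∑' n, condEntFn (A n) μ (a n) x := by
  set N : ℕ → Set X := fun n => undetermined (A n) μ (a n)
  let R : ℕ → Set X := disjointed fun n => saturation G (N n)
  have hN (n : ℕ) : MeasurableSet[mX] (N n) := hT.le n _ (measurableSet_undetermined _ _ _)
  have hR (n : ℕ) : MeasurableSet[invSigma G X] (R n) :=
    MeasurableSet.disjointed
      (fun n => hpmp.invariantAlg.measurableSet_saturation_invSigma (hN n)) n
  have hdet (n k : ℕ) (hk : k < n) : Disjoint (R n) (N k) := by
    simp only [R, disjointed_eq_inter_compl]
    exact disjoint_left.2 fun x hx hxN => mem_iInter₂.1 hx.2 k hk (subset_saturation _ hxN)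
  obtain ⟨Y, hYX, hYN, hY, hYsat⟩ := hpmp.invariantAlg.exists_isPartialTransversal_subset
    hY₀X hY₀ (N := ⋃ n, N n ∩ R n) (.iUnion fun n => (hN n).inter (invSigma_le _ (hR n)))
  have hsat : saturation G (⋃ n, N n ∩ R n) = ⋃ n, saturation G (N n) := by
    simp only [saturation_iUnion, saturation_inter (preimage_smul_of_measurableSet_invSigma (hR _)),
      inter_eq_self_of_subset_right (disjointed_subset (fun n => saturation G (N n)) _),
      R, iUnion_disjointed]
  have hYR (n : ℕ) : Y ∩ R n ⊆ N n := by
    rintro x ⟨hxY, hxR⟩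
    obtain ⟨k, hxN, hxRk⟩ := mem_iUnion.1 (hYN hxY)
    obtain rfl : n = k := (disjoint_disjointed _).eq (Set.not_disjoint_iff.2 ⟨x, hxR, hxRk⟩)
    exact hxN
  have hYzero := condProb_eq_zero_of_measure_inter_eq_zero (μ := μ) (D := (⋃ n, R n)ᶜ) (hT.le 0) hYX
    (.compl (.iUnion fun n => hT.invSigma_le_base _ (hR n))) (by
      rw [(disjoint_compl_right_iff_subset.2 fun x hx => ?_).inter_eq, measure_empty]
      exact iUnion_mono (fun n => inter_subset_right) (hYN hx))
  refine ⟨Y, hYX, hY, by rw [hYsat, hsat], ?_⟩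
  filter_upwards [hYzero, ae_all_iff.2 fun n =>
    hT.binEntropy_condProb_le_condEntFn hpmp hYX hY (hR n) (hdet n) (hYR n)] with x hzero hent
  by_cases hx : x ∈ ⋃ n, R n
  · obtain ⟨n, hn⟩ := mem_iUnion.1 hx
    exact (hent n hn).trans (ENNReal.le_tsum n)
  · simp [hzero hx, ennNegMulLog]

end SmoothPart

/-! ### Labellings supported on a small set -/

section SparseCoding

variable {G X : Type*} [Group G] [MulAction G X] {A mX : MeasurableSpace X} {μ : Measure[mX] X}
  {a lab : X → ℕ} {B Q : Set X} {ε : ℝ}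

lemma setLIntegral_natCodeLength_le [IsProbabilityMeasure μ] (η b : ℝ) (hB : MeasurableSet[mX] B)
    (hlab : Measurable[mX] lab) (hlabB : ∀ x ∉ B, lab x = 0) (Q : Set X) :
    ∫⁻ x in Q, natCodeLength ε η b (lab x) ∂μ ≤
      ENNReal.ofReal ε + (ENNReal.ofReal b * μ B +
        ENNReal.ofReal (1 + η) * ∫⁻ x in B, ENNReal.ofReal (Real.log (lab x)) ∂μ) := by
  have hlog : Measurable[mX] fun x => ENNReal.ofReal (Real.log (lab x)) :=
    (Measurable.of_discrete (f := fun n : ℕ => ENNReal.ofReal (Real.log n))).comp hlab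
  calc ∫⁻ x in Q, natCodeLength ε η b (lab x) ∂μ
      ≤ ∫⁻ x, (ENNReal.ofReal ε + B.indicator (fun x => ENNReal.ofReal b +
          ENNReal.ofReal (1 + η) * ENNReal.ofReal (Real.log (lab x))) x) ∂μ := by
        refine (setLIntegral_le_lintegral Q _).trans (lintegral_mono fun x => ?_)
        by_cases hx : lab x = 0
        · rw [natCodeLength, if_pos hx]
          exact le_self_add
        · rw [natCodeLength, if_neg hx, indicator_of_mem (not_not.1 fun h => hx (hlabB x h))]
          exact le_add_self
    _ = ENNReal.ofReal ε + (ENNReal.ofReal b * μ B +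
          ENNReal.ofReal (1 + η) * ∫⁻ x in B, ENNReal.ofReal (Real.log (lab x)) ∂μ) := by
        rw [lintegral_add_left measurable_const, lintegral_const, measure_univ, mul_one,
          lintegral_indicator hB, lintegral_add_left measurable_const, setLIntegral_const,
          lintegral_const_mul _ hlog]

/-- A labelling `lab` living on a small subset of `Q` from which `a` can be decoded on `Q`, together
with a code for its values which is almost as short on `Q` as the entropy of `a` given `A`. -/
structure IsSparseCoding (G : Type*) {X : Type*} [Group G] [MulAction G X] {mX : MeasurableSpace X}
    (A : MeasurableSpace X) (μ : Measure[mX] X) (a : X → ℕ) (Q : Set X) (ε : ℝ) (l : ℕ → ℝ≥0∞)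
    (lab : X → ℕ) : Prop where
  kraft : ∑' n, ennExpNeg (l n) ≤ 1
  measurable : Measurable[mX] lab
  eq_zero_of_notMem : ∀ x ∉ Q, lab x = 0
  measure_ne_zero_le : μ {x | lab x ≠ 0} ≤ ENNReal.ofReal ε
  setLIntegral_le : ∫⁻ x in Q, l (lab x) ∂μ ≤
    ∫⁻ x in Q, condEntFn A μ a x ∂μ + 3 * ENNReal.ofReal ε
  decodesOn : DecodesOn G A μ lab a Q

lemma exists_isSparseCoding [Countable G] [IsProbabilityMeasure μ] (hpmp : IsPmp G μ) (hA : A ≤ mX)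
    (ha : Measurable[mX] a) (hQ : MeasurableSet[A] Q)
    (hsection : ∀ δ > 0, ∃ B, MeasurableSet[mX] B ∧ saturation G B = Q ∧ μ B ≤ δ)
    (hfin : ∫⁻ x in Q, condEntFn A μ a x ∂μ ≠ ⊤) (hε : 0 < ε) :
    ∃ l lab, IsSparseCoding G A μ a Q ε l lab := by
  set h := ∫⁻ x in Q, condEntFn A μ a x ∂μ with h_def
  have hpos : 0 < h.toReal + 1 := by positivity
  obtain ⟨b, hkraft⟩ := exists_tsum_ennExpNeg_natCodeLength_le_one hε (div_pos hε hpos)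
  set η := ε / (h.toReal + 1) with hη
  obtain ⟨B, hB, rfl, hBμ⟩ := hsection (ENNReal.ofReal ε / (1 + ENNReal.ofReal b))
    (ENNReal.div_pos (ENNReal.ofReal_pos.2 hε).ne' (by finiteness))
  have hBε : μ B + ENNReal.ofReal b * μ B ≤ ENNReal.ofReal ε := by
    calc μ B + ENNReal.ofReal b * μ B = (1 + ENNReal.ofReal b) * μ B := by ring
      _ ≤ (1 + ENNReal.ofReal b) * (ENNReal.ofReal ε / (1 + ENNReal.ofReal b)) := by gcongr
      _ ≤ ENNReal.ofReal ε := ENNReal.mul_div_le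
  have hηε : ENNReal.ofReal η * h ≤ ENNReal.ofReal ε := by
    rw [← ENNReal.ofReal_toReal hfin, ← ENNReal.ofReal_mul (by positivity)]
    refine ENNReal.ofReal_le_ofReal ?_
    rw [hη, div_mul_eq_mul_div, div_le_iff₀ hpos]
    gcongr
    linarith
  obtain ⟨lab, hlab, hlabB, hlog, hdec⟩ := exists_labelling_decodesOn hpmp hA ha hB hQ hfin
  refine ⟨natCodeLength ε η b, lab, hkraft, hlab,
    fun x hx => (hlabB x).2 (notMem_subset (subset_saturation B) hx), ?_, ?_, hdec⟩
  · simp only [ne_eq, hlabB, not_not, ofPred_mem_eq]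
    exact le_self_add.trans hBε
  · calc ∫⁻ x in saturation G B, natCodeLength ε η b (lab x) ∂μ
        ≤ ENNReal.ofReal ε + (ENNReal.ofReal b * μ B + ENNReal.ofReal (1 + η) *
            ∫⁻ x in B, ENNReal.ofReal (Real.log (lab x)) ∂μ) :=
          setLIntegral_natCodeLength_le η b hB hlab (fun x => (hlabB x).2) _
      _ ≤ ENNReal.ofReal ε + (ENNReal.ofReal ε + (h + ENNReal.ofReal ε)) := by
          rw [ENNReal.ofReal_add zero_le_one (by positivity), ENNReal.ofReal_one, add_mul, one_mul]
          gcongr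
          · exact le_add_self.trans hBε
          · exact (mul_le_mul_right hlog _).trans hηε
      _ = h + 3 * ENNReal.ofReal ε := by ring

end SparseCoding

/-! ### Combining the codings of a tower -/

section Combining

variable {G X : Type*} [Group G] [MulAction G X] {m A mX : MeasurableSpace X}
  {μ : Measure[mX] X} {P Y : Set X} {lab : ℕ → X → ℕ} {c : X → ℕ →₀ ℕ}

/-- The words `c x` mark the points of `Y` among those of `P`, and list the labels `lab k x` of the
points outside `P`. -/
structure IsCombinedCoding {X : Type*} {mX : MeasurableSpace X} (μ : Measure[mX] X) (P Y : Set X)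
    (lab : ℕ → X → ℕ) (c : X → ℕ →₀ ℕ) : Prop where
  measurable : Measurable[mX] c
  eq_indicator : ∀ x ∈ P, c x = Y.indicator (fun _ => Finsupp.single 0 1) x
  ae_eq_lab : ∀ᵐ x ∂μ, x ∉ P → ∀ k, c x k = lab k x

lemma exists_isCombinedCoding (hP : MeasurableSet[mX] P) (hY : MeasurableSet[mX] Y)
    (hlab : ∀ k, Measurable[mX] (lab k)) (hsum : ∑' k, μ {x | lab k x ≠ 0} ≠ ⊤) :
    ∃ c, IsCombinedCoding μ P Y lab c := by
  classical
  obtain ⟨c, hc, hclab⟩ := exists_measurable_word hlab (ae_finite_setOfPred_mem hsum)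
  refine ⟨P.piecewise (Y.indicator fun _ => Finsupp.single 0 1) c,
    (measurable_const.indicator hY).piecewise hP hc, fun x hx => piecewise_eq_of_mem _ _ _ hx, ?_⟩
  filter_upwards [hclab] with x hx hxP k
  rw [piecewise_eq_of_notMem _ _ _ hxP, hx]

namespace IsCombinedCoding

lemma mem_iff (hc : IsCombinedCoding μ P Y lab c) {x : X} (hx : x ∈ P) :
    x ∈ Y ↔ c x = Finsupp.single 0 1 := by
  by_cases hxY : x ∈ Y <;> simp [hc.eq_indicator x hx, hxY, eq_comm]

lemma notMem_iff (hc : IsCombinedCoding μ P Y lab c) {x : X} (hx : x ∈ P) : x ∉ Y ↔ c x = 0 := by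
  by_cases hxY : x ∈ Y <;> simp [hc.eq_indicator x hx, hxY]

lemma measurableSet_section (hc : IsCombinedCoding μ P Y lab c) (hYP : Y ⊆ P)
    (hP : MeasurableSet[m] P) (hcm : Measurable[m] c) : MeasurableSet[m] Y := by
  have hY : Y = P ∩ c ⁻¹' {Finsupp.single 0 1} := by
    ext x
    exact ⟨fun hx => ⟨hYP hx, (hc.mem_iff (hYP hx)).1 hx⟩, fun hx => (hc.mem_iff hx.1).2 hx.2⟩
  rw [hY]
  exact hP.inter (hcm (measurableSet_singleton _))

lemma measurable_lab (hc : IsCombinedCoding μ P Y lab c) (hP : MeasurableSet[m] P)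
    (hcm : Measurable[m] c) (hlabP : ∀ k, ∀ x ∈ P, lab k x = 0) (k : ℕ) :
    Measurable[aeCompletion m μ] (lab k) := by
  have hck : Measurable[m] fun x => c x k :=
    (Measurable.of_discrete (f := fun w : ℕ →₀ ℕ => w k)).comp hcm
  refine EventuallyMeasurable.congr (l := ae μ)
    ((hck.indicator hP.compl).mono (le_aeCompletion m μ) le_rfl) ?_
  filter_upwards [hc.ae_eq_lab] with x hx
  by_cases hxP : x ∈ P
  · rw [hlabP k x hxP, indicator_of_notMem (notMem_compl_iff.2 hxP)]
  · rw [indicator_of_mem (mem_compl hxP), hx hxP k]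

lemma setLIntegral_compl_condEntFn_le [IsFiniteMeasure μ] (hc : IsCombinedCoding μ P Y lab c)
    (hm : m ≤ mX) (hP : MeasurableSet[m] P) (hlab : ∀ k, Measurable[mX] (lab k))
    {l : ℕ → ℕ → ℝ≥0∞} (hl : ∀ k, ∑' n, ennExpNeg (l k n) ≤ 1) :
    ∫⁻ x in Pᶜ, condEntFn m μ c x ∂μ ≤ ∑' k, ∫⁻ x in Pᶜ, l k (lab k x) ∂μ := by
  calc ∫⁻ x in Pᶜ, condEntFn m μ c x ∂μ ≤ ∫⁻ x in Pᶜ, ∑' k, l k (c x k) ∂μ :=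
        setLIntegral_condEntFn_le_of_code hm hc.measurable (MeasurableSet.compl hP)
          (tsum_ennExpNeg_tsum_le_one l hl)
    _ = ∫⁻ x in Pᶜ, ∑' k, l k (lab k x) ∂μ := by
        refine setLIntegral_congr_fun_ae (hm _ (MeasurableSet.compl hP)) ?_
        filter_upwards [hc.ae_eq_lab] with x hx hxP
        simp only [hx hxP]
    _ = ∑' k, ∫⁻ x in Pᶜ, l k (lab k x) ∂μ :=
        lintegral_tsum fun k => ((Measurable.of_discrete (f := l k)).comp (hlab k)).aemeasurable

lemma condProb_preimage_eq_zero [IsFiniteMeasure μ] (hc : IsCombinedCoding μ P Y lab c)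
    (hm : m ≤ mX) (hP : MeasurableSet[m] P) :
    ∀ᵐ x ∂μ, x ∈ P → ∀ w ∉ ({Finsupp.single 0 1, 0} : Finset (ℕ →₀ ℕ)),
      condProb m μ (c ⁻¹' {w}) x = 0 := by
  have hempty (w) (hw : w ∉ ({Finsupp.single 0 1, 0} : Finset (ℕ →₀ ℕ))) : c ⁻¹' {w} ∩ P = ∅ := by
    refine eq_empty_of_forall_notMem ?_
    rintro x ⟨rfl, hx⟩
    simp only [Finset.mem_insert, Finset.mem_singleton] at hw
    exact hw ((em (x ∈ Y)).imp (hc.mem_iff hx).1 (hc.notMem_iff hx).1)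
  have hzero (w) (hw : w ∉ ({Finsupp.single 0 1, 0} : Finset (ℕ →₀ ℕ))) :
      ∀ᵐ x ∂μ, x ∈ P → condProb m μ (c ⁻¹' {w}) x = 0 :=
    condProb_eq_zero_of_measure_inter_eq_zero hm (hc.measurable (measurableSet_singleton w)) hP
      (by rw [hempty w hw, measure_empty])
  filter_upwards [ae_all_iff.2 fun w => Filter.eventually_imp_distrib_left.2 (hzero w)]
    with x hx hxP w hw using hx w hw hxP

lemma condEntFn_eq_binEntropy [IsFiniteMeasure μ] (hc : IsCombinedCoding μ P Y lab c)
    (hm : m ≤ mX) (hP : MeasurableSet[m] P) (hY : MeasurableSet[mX] Y) :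
    ∀ᵐ x ∂μ, x ∈ P → condEntFn m μ c x =
      ennNegMulLog (condProb m μ Y x) + ennNegMulLog (1 - condProb m μ Y x) := by
  have hcell (w : ℕ →₀ ℕ) : MeasurableSet[mX] (c ⁻¹' {w}) :=
    hc.measurable (measurableSet_singleton w)
  have hone : ∀ᵐ x ∂μ, x ∈ P →
      condProb m μ (c ⁻¹' {Finsupp.single 0 1}) x = condProb m μ Y x :=
    condProb_congr_on hm (hcell _) hY hP <|
      ext fun _ => and_congr_left fun hx => (hc.mem_iff hx).symm
  have hzero : ∀ᵐ x ∂μ, x ∈ P → condProb m μ (c ⁻¹' {0}) x = condProb m μ Yᶜ x :=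
    condProb_congr_on hm (hcell _) hY.compl hP <|
      ext fun _ => and_congr_left fun hx => (hc.notMem_iff hx).symm
  filter_upwards [hone, hzero, hc.condProb_preimage_eq_zero hm hP,
    condProb_add_condProb_compl (μ := μ) hm hY] with x h1 h0 hother hadd hx
  have hcompl : 1 - condProb m μ Y x = condProb m μ Yᶜ x := by
    rw [← hadd]
    refine ENNReal.add_sub_cancel_left (ne_top_of_le_ne_top ENNReal.one_ne_top ?_)
    exact le_self_add.trans_eq hadd
  have hne : (Finsupp.single 0 1 : ℕ →₀ ℕ) ≠ 0 := by simp
  rw [condEntFn, tsum_eq_sum (s := {Finsupp.single 0 1, 0})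
    fun w hw => by simp [hother hx w hw, ennNegMulLog],
    Finset.sum_pair hne, h1 hx, h0 hx, hcompl]

end IsCombinedCoding

lemma measurable_of_decodesOn_compl [Countable G] [IsFiniteMeasure μ] {a lab : X → ℕ}
    (hpmp : IsPmp G μ) (hA : A ≤ mX) (ha : Measurable[mX] a) (hm : InvariantAlg G m)
    (hAm : A ≤ aeCompletion m μ) (hI : invSigma G X ≤ m)
    (hY : IsPartialTransversal G Y) (hYX : MeasurableSet[mX] Y) (hYm : MeasurableSet[m] Y)
    (hsat : P ∩ undetermined A μ a ⊆ saturation G Y)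
    (hlab : Measurable[aeCompletion m μ] lab) (hdec : DecodesOn G A μ lab a Pᶜ) :
    Measurable[aeCompletion m μ] a := by
  refine @measurable_to_countable' ℕ X _ _ (aeCompletion m μ) a fun j => ?_
  have hcover : a ⁻¹' {j} = (a ⁻¹' {j} ∩ Pᶜ) ∪ ((a ⁻¹' {j} ∩ saturation G Y) ∪
      (a ⁻¹' {j} \ undetermined A μ a)) := by
    rw [Set.sdiff_eq, ← inter_union_distrib_left, ← inter_union_distrib_left, eq_comm,
      inter_eq_left]
    intro x _
    by_cases hx : x ∈ P ∧ x ∈ undetermined A μ a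
    · exact Or.inr (Or.inl (hsat hx))
    · exact (not_and_or.1 hx).imp_right Or.inr
  rw [hcover]
  refine (hdec m hm hAm hlab j).union (MeasurableSet.union ?_ ?_)
  · exact le_aeCompletion m μ _ (hY.measurableSet_inter_saturation hpmp.invariantAlg hI hm hYX hYm
      (ha (measurableSet_singleton j)))
  · exact aeCompletion_le_of_le hAm _ (measurableSet_preimage_sdiff_undetermined hA ha j)

end Combining

namespace IsLabelledTower

variable {G X : Type*} [Group G] [MulAction G X] {mX : MeasurableSpace X}
  {μ : Measure[mX] X} {A : ℕ → MeasurableSpace X} {a lab : ℕ → X → ℕ} {l : ℕ → ℕ → ℝ≥0∞}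
  {ε : ℕ → ℝ} {P Y : Set X} {c : X → ℕ →₀ ℕ}

lemma lintegral_condEntFn_le [IsFiniteMeasure μ] (hT : IsLabelledTower G μ A a)
    (hcode : ∀ n, IsSparseCoding G (A n) μ (a n) Pᶜ (ε n) (l n) (lab n))
    (hc : IsCombinedCoding μ P Y lab c) (hP : MeasurableSet[invSigma G X] P)
    (hY : MeasurableSet[mX] Y)
    (hbin : ∀ᵐ x ∂μ, ennNegMulLog (condProb (A 0) μ Y x) +
      ennNegMulLog (1 - condProb (A 0) μ Y x) ≤ ∑' n, condEntFn (A n) μ (a n) x) :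
    ∫⁻ x, condEntFn (A 0) μ c x ∂μ ≤
      ∑' n, (∫⁻ x, condEntFn (A n) μ (a n) x ∂μ + 3 * ENNReal.ofReal (ε n)) := by
  have hP₀ : MeasurableSet[A 0] P := hT.invSigma_le_base _ hP
  have hPX : MeasurableSet[mX] P := hT.le 0 _ hP₀
  have hsmooth : ∫⁻ x in P, condEntFn (A 0) μ c x ∂μ ≤
      ∑' n, ∫⁻ x in P, condEntFn (A n) μ (a n) x ∂μ := by
    rw [← lintegral_tsum fun n =>
      ((measurable_condEntFn (A n) μ (a n)).mono (hT.le n) le_rfl).aemeasurable]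
    refine setLIntegral_mono_ae' hPX ?_
    filter_upwards [hc.condEntFn_eq_binEntropy (hT.le 0) hP₀ hY, hbin] with x hx hle hxP
    exact (hx hxP).trans_le hle
  have hnonsmooth : ∫⁻ x in Pᶜ, condEntFn (A 0) μ c x ∂μ ≤
      ∑' n, (∫⁻ x in Pᶜ, condEntFn (A n) μ (a n) x ∂μ + 3 * ENNReal.ofReal (ε n)) :=
    (hc.setLIntegral_compl_condEntFn_le (hT.le 0) hP₀ (fun n => (hcode n).measurable)
      fun n => (hcode n).kraft).trans (ENNReal.tsum_le_tsum fun n => (hcode n).setLIntegral_le)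
  rw [← lintegral_add_compl _ hPX]
  refine (add_le_add hsmooth hnonsmooth).trans_eq ?_
  rw [← ENNReal.tsum_add]
  refine tsum_congr fun n => ?_
  rw [← add_assoc, lintegral_add_compl _ hPX]

variable [Countable G]

lemma le_aeCompletion_labelSigma [IsFiniteMeasure μ] (hT : IsLabelledTower G μ A a)
    (hpmp : IsPmp G μ) (hcode : ∀ n, IsSparseCoding G (A n) μ (a n) Pᶜ (ε n) (l n) (lab n))
    (hc : IsCombinedCoding μ P Y lab c) (hP : MeasurableSet[invSigma G X] P)
    (hYX : MeasurableSet[mX] Y) (hY : IsPartialTransversal G Y)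
    (hsat : saturation G Y = (⋃ n, saturation G (undetermined (A n) μ (a n))) ∩ P)
    (n : ℕ) :
    A n ≤ aeCompletion (labelSigma G c ⊔ A 0) μ := by
  have hI : invSigma G X ≤ labelSigma G c ⊔ A 0 := hT.invSigma_le_base.trans le_sup_right
  have hm : InvariantAlg G (labelSigma G c ⊔ A 0) :=
    (invariantAlg_sigmaG _).sup hT.invariantAlg_base
  have hcm : Measurable[labelSigma G c ⊔ A 0] c :=
    (measurable_labelSigma c).mono le_sup_left le_rfl
  have hYP : Y ⊆ P := (subset_saturation Y).trans (hsat.trans_subset inter_subset_right)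
  refine hT.le_aeCompletion_of_measurable hpmp Measure.AbsolutelyContinuous.rfl hm
    (le_sup_right.trans (le_aeCompletion _ μ)) n fun k _ hAk => ?_
  refine measurable_of_decodesOn_compl hpmp (hT.le k) (hT.measurable k) hm hAk hI hY hYX
    (hc.measurableSet_section hYP (hI _ hP) hcm) ?_
    (hc.measurable_lab (hI _ hP) hcm (fun j x hx => (hcode j).eq_zero_of_notMem x
      (notMem_compl_iff.2 hx)) k) (hcode k).decodesOn
  rw [hsat, inter_comm]
  exact inter_subset_inter_left P
    ((subset_saturation _).trans (subset_iUnion (fun n => saturation G (undetermined _ μ _)) k))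

theorem exists_labelling [MeasurableSpace.CountablySeparated X] [IsProbabilityMeasure μ]
    (hT : IsLabelledTower G μ A a) (hpmp : IsPmp G μ)
    (hfin : ∀ n, ∫⁻ x, condEntFn (A n) μ (a n) x ∂μ ≠ ⊤) (hε : ∀ n, 0 < ε n)
    (hεsum : ∑' n, ENNReal.ofReal (ε n) ≠ ⊤) :
    ∃ c : X → ℕ →₀ ℕ, Measurable[mX] c ∧
      ∫⁻ x, condEntFn (A 0) μ c x ∂μ ≤
        ∑' n, (∫⁻ x, condEntFn (A n) μ (a n) x ∂μ + 3 * ENNReal.ofReal (ε n)) ∧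
      ∀ n, A n ≤ aeCompletion (labelSigma G c ⊔ A 0) μ := by
  obtain ⟨Y₀, hY₀X, hY₀, hsection⟩ := exists_completeSection_measure_le hpmp.invariantAlg μ
  obtain ⟨Y, hYX, hY, hsat, hbin⟩ := hT.exists_isPartialTransversal_binEntropy_le hpmp hY₀X hY₀
  have hP := hpmp.invariantAlg.measurableSet_saturation_invSigma hY₀X
  choose l lab hcode using fun n => exists_isSparseCoding hpmp (hT.le n) (hT.measurable n)
    (MeasurableSet.compl (hT.base_le n _ (hT.invSigma_le_base _ hP))) hsection
    (ne_top_of_le_ne_top (hfin n) (setLIntegral_le_lintegral _ _)) (hε n)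
  obtain ⟨c, hc⟩ := exists_isCombinedCoding (hT.le 0 _ (hT.invSigma_le_base _ hP)) hYX
    (fun n => (hcode n).measurable) <|
    ne_top_of_le_ne_top hεsum (ENNReal.tsum_le_tsum fun n => (hcode n).measure_ne_zero_le)
  exact ⟨c, hc.measurable, hT.lintegral_condEntFn_le hcode hc hP hYX hbin,
    hT.le_aeCompletion_labelSigma hpmp hcode hc hP hYX hY hsat⟩

end IsLabelledTower

/-! ### Outer Rokhlin entropy -/

section OuterRokhlin

variable {G X : Type*} {m F : MeasurableSpace X} [Group G] [mX : MeasurableSpace X] [MulAction G X]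
  {μ : Measure X} {ξ : Set (Set X)}

lemma subsetMod_iff : SubsetMod m μ ξ ↔ ∀ s ∈ ξ, MeasurableSet[aeCompletion m μ] s := by
  refine forall₂_congr fun s _ => exists_congr fun t => and_congr_right fun _ => ?_
  exact measure_symmDiff_eq_zero_iff

lemma isPartition_preimage_singleton {a : X → ℕ} (ha : Measurable a) :
    IsPartition fun v => a ⁻¹' {v} :=
  ⟨fun v => ha (measurableSet_singleton v), pairwise_disjoint_fiber a,
    eq_univ_of_forall fun x => mem_iUnion.2 ⟨a x, rfl⟩⟩

lemma IsPartition.exists_eq_preimage_singleton {α : ℕ → Set X} (hα : IsPartition α) :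
    ∃ a : X → ℕ, Measurable a ∧ α = fun v => a ⁻¹' {v} := by
  choose a ha using fun x => mem_iUnion.1 (hα.2.2.symm ▸ mem_univ x)
  have hcell : α = fun v => a ⁻¹' {v} := by
    ext v x
    refine ⟨fun hx => not_not.1 fun hne => ?_, ?_⟩
    · exact disjoint_left.1 (hα.2.1 hne) (ha x) hx
    · rintro rfl
      exact ha x
  exact ⟨a, measurable_to_countable' fun v => congr_fun hcell v ▸ hα.1 v, hcell⟩

variable [IsFiniteMeasure μ]

lemma outerRokhlin_le_lintegral_condEntFn {V : Type*} [Denumerable V] [MeasurableSpace V]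
    [MeasurableSingletonClass V] {a : X → V} (ha : Measurable a)
    (hξ : ∀ s ∈ ξ, MeasurableSet[aeCompletion (labelSigma G a ⊔ (F ⊔ invSigma G X)) μ] s) :
    outerRokhlin G ξ F μ ≤ ∫⁻ x, condEntFn (F ⊔ invSigma G X) μ a x ∂μ := by
  let e : V ≃ ℕ := Denumerable.eqv V
  have hea : Measurable (e ∘ a) := (measurable_of_countable e).comp ha
  have hlabel : labelSigma G a ≤ labelSigma G (e ∘ a) := by
    refine labelSigma_le (invariantAlg_sigmaG _) ?_
    simpa only [← comp_assoc, e.symm_comp_self, id_comp] using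
      (Measurable.of_discrete (f := e.symm)).comp (measurable_labelSigma (G := G) (e ∘ a))
  rw [← condEntFn_comp_equiv e a, ← condEnt_preimage_singleton hea]
  refine sInf_le ⟨_, isPartition_preimage_singleton hea, subsetMod_iff.2 fun s hs => ?_, rfl⟩
  rw [sup_assoc]
  exact aeCompletion_mono (sup_le_sup_right hlabel _) s (hξ s hs)

lemma exists_labelling_of_outerRokhlin_ne_top (h : outerRokhlin G ξ F μ ≠ ⊤) {δ : ℝ≥0∞}
    (hδ : δ ≠ 0) :
    ∃ a : X → ℕ, Measurable a ∧
      ∫⁻ x, condEntFn (F ⊔ invSigma G X) μ a x ∂μ ≤ outerRokhlin G ξ F μ + δ ∧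
      ∀ s ∈ ξ, MeasurableSet[aeCompletion (labelSigma G a ⊔ (F ⊔ invSigma G X)) μ] s := by
  obtain ⟨_, ⟨α, hα, hξ, rfl⟩, hlt⟩ := sInf_lt_iff.1 (ENNReal.lt_add_right h hδ)
  obtain ⟨a, ha, rfl⟩ := hα.exists_eq_preimage_singleton
  rw [condEnt_preimage_singleton ha] at hlt
  rw [sup_assoc] at hξ
  exact ⟨a, ha, hlt.le, subsetMod_iff.1 hξ⟩

end OuterRokhlin

section PastSigma

variable {X : Type*} {F : MeasurableSpace X} {S : ℕ → MeasurableSpace X}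

/-- The σ-algebra conditioned on at stage `n`: the previous term of `S` joined with `F`, or `F`
itself at stage `0`. -/
abbrev pastSigma (F : MeasurableSpace X) (S : ℕ → MeasurableSpace X) :
    ℕ → MeasurableSpace X
  | 0 => F
  | n + 1 => S n ⊔ F

lemma le_pastSigma (n : ℕ) : F ≤ pastSigma F S n := by
  cases n with
  | zero => exact le_rfl
  | succ n => exact le_sup_right

lemma pastSigma_le {m : MeasurableSpace X} (hF : F ≤ m) (hS : ∀ n, S n ≤ m) (n : ℕ) :
    pastSigma F S n ≤ m := by
  cases n with
  | zero => exact hF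
  | succ n => exact sup_le (hS n) hF

end PastSigma

section Subadditivity

variable {G X : Type*} {F : MeasurableSpace X} [Group G] [mX : MeasurableSpace X]
  [MulAction G X] {μ : Measure X} {ξ : Set (Set X)} {S : ℕ → MeasurableSpace X}

lemma isLabelledTower_pastSigma {a : ℕ → X → ℕ} (hF : F ≤ mX)
    (hFinv : InvariantAlg G F) (hS : ∀ n, S n ≤ mX) (ha : ∀ n, Measurable (a n))
    (hgen : ∀ n, S n ≤
      aeCompletion (labelSigma G (a n) ⊔ (pastSigma F S n ⊔ invSigma G X)) μ) :
    IsLabelledTower G μ (fun n => pastSigma F S n ⊔ invSigma G X) a where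
  le n := sup_le (pastSigma_le hF hS n) invSigma_le
  base_le n := sup_le_sup_right (le_pastSigma n) _
  invariantAlg_base := hFinv.sup invariantAlg_invSigma
  invSigma_le_base := le_sup_right
  measurable := ha
  succ_le n := by
    have hpast : pastSigma F S n ⊔ invSigma G X ≤
        aeCompletion (labelSigma G (a n) ⊔ (pastSigma F S n ⊔ invSigma G X)) μ :=
      le_sup_right.trans (le_aeCompletion _ μ)
    exact sup_le (sup_le (hgen n) ((le_pastSigma n).trans (le_sup_left.trans hpast)))
      (le_sup_right.trans hpast)

variable [Countable G] [MeasurableSpace.CountablySeparated X] [IsProbabilityMeasure μ]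

theorem IsLabelledTower.outerRokhlin_le_tsum {A : ℕ → MeasurableSpace X} {a : ℕ → X → ℕ}
    (hT : IsLabelledTower G μ A a) (hpmp : IsPmp G μ) (hA₀ : A 0 = F ⊔ invSigma G X)
    (hξ : ∀ s ∈ ξ, MeasurableSet[aeCompletion (⨆ n, A n) μ] s) :
    outerRokhlin G ξ F μ ≤ ∑' n, ∫⁻ x, condEntFn (A n) μ (a n) x ∂μ := by
  obtain ⟨hdenumerable⟩ := nonempty_denumerable (ℕ →₀ ℕ)
  refine ENNReal.le_of_forall_pos_le_add fun δ hδ htop => ?_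
  obtain ⟨ε, hε, hεδ⟩ := ENNReal.exists_pos_sum_of_countable
    (ε := δ / 3) (by simpa using hδ.ne') ℕ
  obtain ⟨c, hcm, hc, hgen⟩ := hT.exists_labelling (ε := fun n => ε n) hpmp
    (fun n => ENNReal.ne_top_of_tsum_ne_top htop.ne n) hε
    (by simpa only [ENNReal.ofReal_coe_nnreal] using hεδ.ne_top)
  rw [hA₀] at hc hgen
  calc outerRokhlin G ξ F μ ≤ ∫⁻ x, condEntFn (F ⊔ invSigma G X) μ c x ∂μ :=
        outerRokhlin_le_lintegral_condEntFn hcm fun s hs =>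
          aeCompletion_le_of_le (iSup_le hgen) s (hξ s hs)
    _ ≤ ∑' n, (∫⁻ x, condEntFn (A n) μ (a n) x ∂μ + 3 * ENNReal.ofReal (ε n)) := hc
    _ = ∑' n, ∫⁻ x, condEntFn (A n) μ (a n) x ∂μ + 3 * ∑' n, (ε n : ℝ≥0∞) := by
        simp only [ENNReal.tsum_add, ENNReal.tsum_mul_left, ENNReal.ofReal_coe_nnreal]
    _ ≤ ∑' n, ∫⁻ x, condEntFn (A n) μ (a n) x ∂μ + 3 * (δ / 3) := by gcongr
    _ ≤ ∑' n, ∫⁻ x, condEntFn (A n) μ (a n) x ∂μ + δ := by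
        gcongr
        exact ENNReal.mul_div_le

theorem outerRokhlin_le_tsum (hpmp : IsPmp G μ) (hF : F ≤ mX) (hFinv : InvariantAlg G F)
    (hS : ∀ n, S n ≤ mX) (hξ : SubsetMod ((⨆ n, S n) ⊔ F) μ ξ) :
    outerRokhlin G ξ F μ ≤ ∑' n, outerRokhlinAlg G (S n) (pastSigma F S n) μ := by
  refine ENNReal.le_of_forall_pos_le_add fun δ hδ htop => ?_
  obtain ⟨ε, hε, hεδ⟩ := ENNReal.exists_pos_sum_of_countable' (ENNReal.coe_ne_zero.2 hδ.ne') ℕ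
  choose a ha hent hgen using fun n => exists_labelling_of_outerRokhlin_ne_top
    (ENNReal.ne_top_of_tsum_ne_top htop.ne n) (hε n).ne'
  have hT := isLabelledTower_pastSigma hF hFinv hS ha hgen
  have hle : (⨆ n, S n) ⊔ F ≤ ⨆ n, pastSigma F S n ⊔ invSigma G X :=
    sup_le (iSup_mono' fun n => ⟨n + 1, le_sup_left.trans le_sup_left⟩)
      (le_sup_left.trans (le_iSup (fun n => pastSigma F S n ⊔ invSigma G X) 0))
  calc outerRokhlin G ξ F μ
      ≤ ∑' n, ∫⁻ x, condEntFn (pastSigma F S n ⊔ invSigma G X) μ (a n) x ∂μ :=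
        hT.outerRokhlin_le_tsum hpmp rfl fun s hs =>
          aeCompletion_mono hle s (subsetMod_iff.1 hξ s hs)
    _ ≤ ∑' n, (outerRokhlinAlg G (S n) (pastSigma F S n) μ + ε n) := ENNReal.tsum_le_tsum hent
    _ ≤ ∑' n, outerRokhlinAlg G (S n) (pastSigma F S n) μ + δ := by
        rw [ENNReal.tsum_add]
        gcongr

end Subadditivity

theorem statement10_general {G X : Type*} (F : MeasurableSpace X) [Group G] [Countable G]
    [mX : MeasurableSpace X] [MeasurableSpace.CountablySeparated X] [MulAction G X]
    (μ : Measure X) [IsProbabilityMeasure μ] (hpmp : IsPmp G μ) (ξ : Set (Set X))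
    (hF : F ≤ mX) (hFinv : InvariantAlg G F) (S : ℕ → MeasurableSpace X) (hle : ∀ n, S n ≤ mX)
    (hgen : SubsetMod ((⨆ n, S n) ⊔ F) μ ξ) :
    outerRokhlin G ξ F μ ≤
      outerRokhlinAlg G (S 0) F μ +
        ∑' n : ℕ, outerRokhlinAlg G (S (n + 1)) (S n ⊔ F) μ :=
  (outerRokhlin_le_tsum hpmp hF hFinv hle hgen).trans_eq (tsum_eq_zero_add' ENNReal.summable)

/-- Corollary 4.6, countable sub-additivity: here `S n` plays the role
of `Σ_{n+1}` of the natural-language statement. -/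
theorem statement10 {G X : Type*} (F : MeasurableSpace X) [Group G] [Countable G]
    [mX : MeasurableSpace X] [StandardBorelSpace X] [MulAction G X]
    (μ : Measure X) [IsProbabilityMeasure μ] (hpmp : IsPmp G μ)
    (ξ : Set (Set X)) (hξm : ∀ A ∈ ξ, MeasurableSet A)
    (hF : F ≤ mX) (hFinv : InvariantAlg G F)
    (S : ℕ → MeasurableSpace X) (hmono : Monotone S) (hle : ∀ n, S n ≤ mX)
    (hinv : ∀ n, InvariantAlg G (S n))
    (hgen : SubsetMod ((⨆ n, S n) ⊔ F) μ ξ) :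
    outerRokhlin G ξ F μ ≤
      outerRokhlinAlg G (S 0) F μ +
        ∑' n : ℕ, outerRokhlinAlg G (S (n + 1)) (S n ⊔ F) μ := by
  exact statement10_general F μ hpmp ξ hF hFinv S hle hgen
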